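/- arXiv:2107.08444 — 12 statements merged into one kernel-verified Lean document; each statement's English description precedes it below -/
import Mathlib

section
/- For any partial concept class H on a set X with VC(H) < ∞, there exists a function A : (X × {0,1})* × X → {0,1} such that for every n ∈ ℕ and every sequence (x₁,y₁),…,(xₙ,yₙ) ∈ (X × {0,1})ⁿ that is realizable with respect to H, (1/n!) · Σ_{σ ∈ Sym(n)} 1[ A((x_{σ(1)},y_{σ(1)}),…,(x_{σ(n−1)},y_{σ(n−1)}); x_{σ(n)}) ≠ y_{σ(n)} ] ≤ VC(H)/n, where Sym(n) is the symmetric group on {1,…,n}. -/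
/-!
The predictor is the one-inclusion graph algorithm. For a finite `U ⊆ X`, the patterns on `U`
realized by `H`, encoded as subsets of `U`, form a set family that shatters no set of more than `d`
points. Join two patterns by an edge in direction `x` when they differ exactly at `x`.

* `sum_card_edgeDir_le`: a family of VC dimension at most `d` has at most `d` times as many edges as
  vertices. Splitting the family at a point `a` into `F₀` and `F₁`, the edges in direction `a` are
  counted by `F₀ ∩ F₁`, and edge counts are supermodular:
  `e(F₀) + e(F₁) ≤ e(F₀ ∪ F₁) + e(F₀ ∩ F₁)`. Since `F₀ ∪ F₁` has VC dimension at most `d` and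
  `F₀ ∩ F₁` at most `d - 1`, induction applies.
* `exists_orientation`: every subfamily satisfies the same density bound, which is Hall's condition
  for assigning each edge to one of its endpoints so that no vertex receives more than `d` edges.

Given a sample and a fresh test point `x`, the labels seen determine an edge in direction `x` (or a
single pattern), and the predictor outputs the label of the endpoint to which the edge is *not*
assigned. The points of `U` on which the true pattern is mispredicted are then directions of edges
assigned to it, hence at most `d` in number. A test point that already occurs in the sample is
predicted correctly by lookup, so at most `d` positions of the sequence are mispredicted when left
out. By symmetry the last entry of a random permutation is a uniformly random position
(`sum_perm_last`).
-/

/-- A partial concept class realizes a labeled sample (a sequence is realizable w.r.t. `H`). -/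
def RealizableSeq {X : Type*} (H : Set (X → Option Bool)) (S : List (X × Bool)) : Prop :=
  ∃ h ∈ H, ∀ p ∈ S, h p.1 = some p.2

/-- A finite set `U` is shattered by the partial concept class `H`. -/
def Shatters {X : Type*} (H : Set (X → Option Bool)) (U : Finset X) : Prop :=
  ∀ f : X → Bool, ∃ h ∈ H, ∀ x ∈ U, h x = some (f x)

/-- `VC(H) = d`: some shattered set has size `d` and every shattered set has size at most `d`. -/
def VCDimEq {X : Type*} (H : Set (X → Option Bool)) (d : ℕ) : Prop :=
  (∃ U : Finset X, Shatters H U ∧ U.card = d) ∧ ∀ U : Finset X, Shatters H U → U.card ≤ d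

namespace OneInclusion

open Finset

/-! ### Density and orientation of one-inclusion graphs -/

section Family

variable {α : Type*} [DecidableEq α]

/-- The edges of the one-inclusion graph of `𝒜` in direction `x`: the sets `s` with `x ∉ s` such that
both `s` and `insert x s` lie in `𝒜`. An edge is represented by its lower endpoint. -/
def edgeDir (𝒜 : Finset (Finset α)) (x : α) : Finset (Finset α) :=
  {s ∈ 𝒜 | x ∉ s ∧ insert x s ∈ 𝒜}

lemma mem_edgeDir {𝒜 : Finset (Finset α)} {x : α} {s : Finset α} :
    s ∈ edgeDir 𝒜 x ↔ s ∈ 𝒜 ∧ x ∉ s ∧ insert x s ∈ 𝒜 := by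
  simp [edgeDir]

/-- Supermodularity of the number of edges in a fixed direction. -/
lemma card_edgeDir_add_le (𝒜 ℬ : Finset (Finset α)) (x : α) :
    #(edgeDir 𝒜 x) + #(edgeDir ℬ x) ≤ #(edgeDir (𝒜 ∪ ℬ) x) + #(edgeDir (𝒜 ∩ ℬ) x) := by
  rw [← card_union_add_card_inter]
  refine Nat.add_le_add (card_le_card ?_) (card_le_card ?_)
  · intro s
    simp only [mem_union, mem_edgeDir]
    tauto
  · intro s
    simp only [mem_inter, mem_edgeDir]
    tauto

/-- Edges in a direction `x ≠ a` lie within one of the two halves of `𝒜` cut out by `a`. -/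
lemma card_edgeDir_eq (𝒜 : Finset (Finset α)) {a x : α} (hxa : x ≠ a) :
    #(edgeDir 𝒜 x) = #(edgeDir (𝒜.nonMemberSubfamily a) x)
      + #(edgeDir (𝒜.memberSubfamily a) x) := by
  rw [← card_memberSubfamily_add_card_nonMemberSubfamily a (edgeDir 𝒜 x), add_comm]
  congr 2
  · ext s
    simp only [mem_nonMemberSubfamily, mem_edgeDir, mem_insert]
    grind
  · ext s
    simp only [mem_memberSubfamily, mem_edgeDir, mem_insert, Finset.insert_comm x a]
    grind

lemma edgeDir_self (𝒜 : Finset (Finset α)) (a : α) :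
    edgeDir 𝒜 a = 𝒜.nonMemberSubfamily a ∩ 𝒜.memberSubfamily a := by
  ext s
  simp only [mem_inter, mem_nonMemberSubfamily, mem_memberSubfamily, mem_edgeDir]
  tauto

/-- Shattering lifts from the union of the two halves to `𝒜`, so that the union has
VC dimension at most that of `𝒜`. -/
lemma shatters_of_union {𝒜 : Finset (Finset α)} {a : α} {s : Finset α}
    (h : (𝒜.nonMemberSubfamily a ∪ 𝒜.memberSubfamily a).Shatters s) : 𝒜.Shatters s := by
  have ha : a ∉ s := by
    intro ha
    obtain ⟨v, hv, hvs⟩ := h (Subset.refl s)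
    simp only [mem_union, mem_nonMemberSubfamily, mem_memberSubfamily] at hv
    have : a ∈ s ∩ v := by rw [hvs]; exact ha
    grind
  intro t ht
  obtain ⟨v, hv, hvs⟩ := h ht
  simp only [mem_union, mem_nonMemberSubfamily, mem_memberSubfamily] at hv
  rcases hv with hv | hv
  · exact ⟨v, hv.1, hvs⟩
  · exact ⟨insert a v, hv.1, by rw [inter_insert_of_notMem ha, hvs]⟩

/-- Intersecting the two halves lowers the VC dimension by at least one. -/
lemma shatters_insert_of_inter {𝒜 : Finset (Finset α)} {a : α} {s : Finset α}
    (h : (𝒜.nonMemberSubfamily a ∩ 𝒜.memberSubfamily a).Shatters s) :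
    a ∉ s ∧ 𝒜.Shatters (insert a s) := by
  have ha : a ∉ s := by
    intro ha
    obtain ⟨v, hv, hvs⟩ := h (Subset.refl s)
    simp only [mem_inter, mem_nonMemberSubfamily, mem_memberSubfamily] at hv
    have : a ∈ s ∩ v := by rw [hvs]; exact ha
    grind
  refine ⟨ha, fun t ht => ?_⟩
  obtain ⟨v, hv, hvs⟩ := h (t := t.erase a) (by grind)
  simp only [mem_inter, mem_nonMemberSubfamily, mem_memberSubfamily] at hv
  by_cases hat : a ∈ t
  · exact ⟨insert a v, hv.2.1, by
      rw [← insert_inter_distrib, hvs, insert_erase hat]⟩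
  · exact ⟨v, hv.1.1, by
      rw [insert_inter_of_notMem hv.1.2, hvs, erase_eq_of_notMem hat]⟩

/-- The one-inclusion graph of a family of VC dimension at most `d` has at most `d` times as many
edges as vertices. -/
lemma sum_card_edgeDir_le (u : Finset α) : ∀ (d : ℕ) (𝒜 : Finset (Finset α)),
    (∀ s ∈ 𝒜, s ⊆ u) → (∀ s, 𝒜.Shatters s → #s ≤ d) → ∑ x ∈ u, #(edgeDir 𝒜 x) ≤ d * #𝒜 := by
  induction u using Finset.induction_on with
  | empty => simp
  | insert a u ha ih =>
    intro d 𝒜 hu hd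
    set F₀ := 𝒜.nonMemberSubfamily a with hF₀
    set F₁ := 𝒜.memberSubfamily a with hF₁
    have hsub : ∀ s ∈ F₀ ∪ F₁, s ⊆ u := by
      intro s hs
      simp only [hF₀, hF₁, mem_union, mem_nonMemberSubfamily, mem_memberSubfamily] at hs
      rcases hs with hs | hs
      · exact (subset_insert_iff_of_notMem hs.2).1 (hu s hs.1)
      · exact (subset_insert_iff_of_notMem hs.2).1 ((subset_insert a s).trans (hu _ hs.1))
    have h1 : ∑ x ∈ u, #(edgeDir (F₀ ∪ F₁) x) ≤ d * #(F₀ ∪ F₁) :=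
      ih d _ hsub fun s hs => hd s (shatters_of_union hs)
    have h2 : ∑ x ∈ u, #(edgeDir (F₀ ∩ F₁) x) + #(F₀ ∩ F₁) ≤ d * #(F₀ ∩ F₁) := by
      have key : ∀ s, (F₀ ∩ F₁).Shatters s → #s + 1 ≤ d := fun s hs => by
        obtain ⟨has, h⟩ := shatters_insert_of_inter hs
        simpa [card_insert_of_notMem has] using hd _ h
      cases d with
      | zero =>
        -- a nonempty family shatters `∅`, so `F₀ ∩ F₁` has no members when `d = 0`
        have : F₀ ∩ F₁ = ∅ := by
          by_contra hne
          have := key ∅ (shatters_empty.2 (nonempty_iff_ne_empty.2 hne))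
          omega
        rw [this]
        simp [edgeDir]
      | succ d =>
        have := ih d (F₀ ∩ F₁) (fun s hs => hsub s (by grind)) fun s hs => by
          have := key s hs
          omega
        linarith
    have h3 : ∑ x ∈ u, #(edgeDir 𝒜 x)
        ≤ ∑ x ∈ u, #(edgeDir (F₀ ∪ F₁) x) + ∑ x ∈ u, #(edgeDir (F₀ ∩ F₁) x) := by
      rw [← sum_add_distrib]
      refine sum_le_sum fun x hx => ?_
      rw [card_edgeDir_eq 𝒜 (a := a) (by rintro rfl; exact ha hx)]
      exact card_edgeDir_add_le _ _ _
    have h4 : #𝒜 = #(F₀ ∪ F₁) + #(F₀ ∩ F₁) := by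
      rw [card_union_add_card_inter, add_comm,
        card_memberSubfamily_add_card_nonMemberSubfamily]
    rw [sum_insert ha, edgeDir_self, h4]
    linarith

/-- A family of VC dimension at most `d` has an orientation of its one-inclusion graph with
out-degrees at most `d`, stated as a prediction rule: `g x t` is the label predicted for `x` from the
pattern `t` on the remaining points, and each member is mispredicted at most `d` times. -/
lemma exists_orientation (u : Finset α) (d : ℕ) (𝒜 : Finset (Finset α))
    (hu : ∀ s ∈ 𝒜, s ⊆ u) (hd : ∀ s, 𝒜.Shatters s → #s ≤ d) :
    ∃ g : α → Finset α → Bool, ∀ s ∈ 𝒜, #{x ∈ u | g x (s.erase x) ≠ decide (x ∈ s)} ≤ d := by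
  classical
  let ι := {p : α × Finset α // p.1 ∈ u ∧ p.2 ∈ edgeDir 𝒜 p.1}
  let ends : ι → Finset (Finset α) := fun e => {e.1.2, insert e.1.1 e.1.2}
  -- each vertex is offered with `d` slots, so an injective choice loads it at most `d` times
  have hall : ∃ f : ι → Finset α × ℕ, Function.Injective f ∧ ∀ e, f e ∈ ends e ×ˢ range d := by
    rw [← all_card_le_biUnion_card_iff_exists_injective]
    intro A
    let V := A.biUnion ends
    have hV : A.biUnion (fun e => ends e ×ˢ range d) = V ×ˢ range d := by
      ext ⟨s, i⟩
      simp only [V, mem_biUnion, mem_product]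
      tauto
    have hV𝒜 : V ⊆ 𝒜 := by
      intro s hs
      obtain ⟨e, -, he⟩ := mem_biUnion.1 hs
      have := mem_edgeDir.1 e.2.2
      simp only [ends, mem_insert, mem_singleton] at he
      rcases he with rfl | rfl
      · exact this.1
      · exact this.2.2
    have hA : #A ≤ ∑ x ∈ u, #(edgeDir V x) := by
      rw [← card_sigma]
      refine card_le_card_of_injOn (fun e => ⟨e.1.1, e.1.2⟩) (fun e he => ?_) ?_
      · have h1 : e.1.2 ∈ V := mem_biUnion.2 ⟨e, he, by simp [ends]⟩
        have h2 : insert e.1.1 e.1.2 ∈ V := mem_biUnion.2 ⟨e, he, by simp [ends]⟩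
        exact mem_sigma.2 ⟨e.2.1, mem_edgeDir.2 ⟨h1, (mem_edgeDir.1 e.2.2).2.1, h2⟩⟩
      · rintro ⟨⟨x, s⟩, _⟩ - ⟨⟨y, t⟩, _⟩ - h
        simp only [Sigma.mk.injEq, heq_eq_eq] at h
        simp [h.1, h.2]
    rw [hV, card_product, card_range, mul_comm]
    exact hA.trans (sum_card_edgeDir_le u d V (fun s hs => hu s (hV𝒜 hs))
      fun s hs => hd s (hs.mono_left hV𝒜))
  obtain ⟨f, hf, hfe⟩ := hall
  -- an edge assigned to its lower endpoint predicts the upper one, and vice versa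
  let g : α → Finset α → Bool := fun x t =>
    if h : x ∈ u ∧ t ∈ edgeDir 𝒜 x then decide ((f ⟨(x, t), h⟩).1 = t)
    else decide (insert x t ∈ 𝒜)
  refine ⟨g, fun s hs => ?_⟩
  have hedge : ∀ x ∈ ({x ∈ u | g x (s.erase x) ≠ decide (x ∈ s)} : Finset α),
      ∃ e : ι, e.1.1 = x ∧ (f e).1 = s := by
    intro x hx
    obtain ⟨hxu, hne⟩ := mem_filter.1 hx
    by_cases h : x ∈ u ∧ s.erase x ∈ edgeDir 𝒜 x
    · refine ⟨⟨(x, s.erase x), h⟩, rfl, ?_⟩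
      have hmem := (mem_product.1 (hfe ⟨(x, s.erase x), h⟩)).1
      simp only [ends, mem_insert, mem_singleton] at hmem
      simp only [g, dif_pos h, ne_eq, decide_eq_decide] at hne
      by_cases hxs : x ∈ s
      · rw [insert_erase hxs] at hmem
        tauto
      · exact (not_not.1 fun h0 => hne (iff_of_false h0 hxs)).trans (erase_eq_of_notMem hxs)
    · exfalso
      simp only [g, dif_neg h, ne_eq, decide_eq_decide] at hne
      by_cases hxs : x ∈ s
      · rw [insert_erase hxs] at hne
        tauto
      · rw [erase_eq_of_notMem hxs] at hne h
        rw [mem_edgeDir] at h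
        tauto
  choose e he1 he2 using hedge
  rw [← card_attach]
  refine (card_le_card_of_injOn (t := range d) (fun x => (f (e x.1 x.2)).2) (fun x _ => ?_)
    ?_).trans (card_range d).le
  · exact (mem_product.1 (hfe _)).2
  · intro x _ y _ hxy
    have := hf (Prod.ext ((he2 x.1 x.2).trans (he2 y.1 y.2).symm) hxy)
    exact Subtype.ext (by rw [← he1 x.1 x.2, this, he1 y.1 y.2])

end Family

/-! ### The predictor -/

section Predictor

variable {X : Type*}

open Classical in
/-- The patterns on `U` realized by `H`, a pattern being encoded by the set of points labelled
`true`. -/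
noncomputable def patterns (H : Set (X → Option Bool)) (U : Finset X) : Finset (Finset X) :=
  {s ∈ U.powerset | ∃ h ∈ H, ∀ x ∈ U, h x = some (decide (x ∈ s))}

open Classical in
/-- For each `U` there is a prediction rule erring at most `d` times on each pattern realized by `H`,
since a set shattered by `patterns H U` is shattered by `H`. -/
lemma exists_rule {H : Set (X → Option Bool)} {d : ℕ} (hVC : VCDimEq H d) (U : Finset X) :
    ∃ g : X → Finset X → Bool, ∀ s ∈ patterns H U,
      #{x ∈ U | g x (s.erase x) ≠ decide (x ∈ s)} ≤ d := by
  have hsub : ∀ s ∈ patterns H U, s ⊆ U := fun s hs => mem_powerset.1 (mem_filter.1 hs).1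
  refine exists_orientation U d _ hsub fun s hs => hVC.2 s fun f => ?_
  obtain ⟨w, hw, hsw⟩ := hs (Subset.refl s)
  have hsU : s ⊆ U := (inter_eq_left.1 hsw).trans (hsub w hw)
  obtain ⟨v, hv, hsv⟩ := hs (filter_subset (fun x => f x = true) s)
  obtain ⟨h, hH, hv⟩ := (mem_filter.1 hv).2
  refine ⟨h, hH, fun x hx => ?_⟩
  have : x ∈ v ↔ f x = true := by
    have := congrArg (x ∈ ·) hsv
    simpa [hx] using this
  rw [hv x (hsU hx)]
  simp [this]

open Classical in
/-- The one-inclusion graph predictor built from the rules `g U`: labels already seen are repeated,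
and a fresh point is predicted by the rule for the set of all points involved. -/
noncomputable def predictor (g : Finset X → X → Finset X → Bool) (S : List (X × Bool)) (x : X) :
    Bool :=
  if x ∈ S.map Prod.fst then decide ((x, true) ∈ S)
  else g (insert x (S.map Prod.fst).toFinset) x
    {z ∈ (S.map Prod.fst).toFinset | (z, true) ∈ S}

/-- The last entry of a uniformly random permutation is a uniformly random index. -/
lemma sum_perm_last (n : ℕ) (F : Fin (n + 1) → ℝ) :
    (n + 1 : ℝ) * ∑ σ : Equiv.Perm (Fin (n + 1)), F (σ (Fin.last n))
      = (n + 1).factorial * ∑ i, F i := by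
  have h : ∀ j : Fin (n + 1), ∑ σ : Equiv.Perm (Fin (n + 1)), F (σ j)
      = ∑ σ : Equiv.Perm (Fin (n + 1)), F (σ (Fin.last n)) := fun j =>
    Fintype.sum_equiv (Equiv.mulRight (Equiv.swap (Fin.last n) j)) _ _ fun σ => by simp
  calc _ = ∑ j : Fin (n + 1), ∑ σ : Equiv.Perm (Fin (n + 1)), F (σ j) := by simp [h]
    _ = ∑ σ : Equiv.Perm (Fin (n + 1)), ∑ j : Fin (n + 1), F (σ j) := sum_comm
    _ = _ := by simp [Equiv.sum_comp, Fintype.card_perm]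

end Predictor

end OneInclusion

open Finset OneInclusion in
/-- one-inclusion graph predictor for partial concept classes:
if `VC(H) = d < ∞` there is a predictor `A : (X × {0,1})* × X → {0,1}` whose average
leave-one-out error over all permutations of any realizable sequence of length `n ≥ 1`
is at most `VC(H)/n`.  (Here the length is written `n+1`.) -/
theorem one_inclusion_graph_predictor {X : Type*} (H : Set (X → Option Bool)) (d : ℕ)
    (hVC : VCDimEq H d) :
    ∃ A : List (X × Bool) → X → Bool,
      ∀ (n : ℕ) (xy : Fin (n + 1) → X × Bool),
        RealizableSeq H (List.ofFn xy) →
        (1 / (n + 1).factorial : ℝ) *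
            ∑ σ : Equiv.Perm (Fin (n + 1)),
              (if A (List.ofFn fun i : Fin n => xy (σ i.castSucc)) (xy (σ (Fin.last n))).1
                  ≠ (xy (σ (Fin.last n))).2 then (1 : ℝ) else 0)
          ≤ (d : ℝ) / (n + 1) := by
  classical
  choose g hg using exists_rule hVC
  refine ⟨predictor g, fun n xy ⟨h, hH, hreal⟩ => ?_⟩
  have hxy : ∀ i, h (xy i).1 = some (xy i).2 := fun i => hreal _ (List.mem_ofFn.2 ⟨i, rfl⟩)
  let U : Finset X := univ.image fun i => (xy i).1
  let s : Finset X := {x ∈ U | h x = some true}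
  have hs : s ∈ patterns H U := by
    refine mem_filter.2 ⟨mem_powerset.2 (filter_subset _ _), h, hH, fun x hx => ?_⟩
    obtain ⟨i, -, rfl⟩ := mem_image.1 hx
    have : (xy i).1 ∈ s ↔ (xy i).2 = true := by simp [s, hx, hxy]
    simp [hxy, this]
  let B : Finset X := {x ∈ U | g U x (s.erase x) ≠ decide (x ∈ s)}
  let I : Finset (Fin (n + 1)) := {i | (xy i).1 ∈ B ∧ ∀ j, (xy j).1 = (xy i).1 → j = i}
  have hI : #I ≤ d := by
    refine (card_le_card_of_injOn (fun i => (xy i).1) (fun i hi => ?_) ?_).trans (hg U s hs)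
    · exact (mem_filter.1 hi).2.1
    · intro i _ j hj hij
      exact (mem_filter.1 hj).2.2 i hij
  -- an error occurs only if the left-out point is fresh and lies in `B`
  have herr : ∀ σ : Equiv.Perm (Fin (n + 1)),
      predictor g (List.ofFn fun i : Fin n => xy (σ i.castSucc)) (xy (σ (Fin.last n))).1
        ≠ (xy (σ (Fin.last n))).2 → σ (Fin.last n) ∈ I := by
    intro σ hσ
    set S := List.ofFn fun i : Fin n => xy (σ i.castSucc) with hS
    set k := σ (Fin.last n) with hk
    have hmemS : ∀ p, p ∈ S ↔ ∃ j, j ≠ k ∧ xy j = p := by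
      intro p
      rw [hS, List.mem_ofFn]
      constructor
      · rintro ⟨i, rfl⟩
        exact ⟨_, fun hi => (Fin.castSucc_lt_last i).ne (σ.injective hi), rfl⟩
      · rintro ⟨j, hj, rfl⟩
        have : σ.symm j ≠ Fin.last n := fun hj' => hj (by rw [hk, ← hj']; simp)
        obtain ⟨i, hi⟩ := Fin.exists_castSucc_eq.2 this
        exact ⟨i, by simp [hi]⟩
    have hmemX : ∀ x, x ∈ S.map Prod.fst ↔ ∃ j, j ≠ k ∧ (xy j).1 = x := by
      intro x
      simp only [List.mem_map, hmemS]
      grind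
    -- labels in the sample agree with `h`
    have htrue : ∀ x, (x, true) ∈ S ↔ x ∈ S.map Prod.fst ∧ h x = some true := by
      intro x
      rw [hmemS, hmemX]
      constructor
      · rintro ⟨j, hj, hjx⟩
        exact ⟨⟨j, hj, by rw [hjx]⟩, by simpa [hjx] using hxy j⟩
      · rintro ⟨⟨j, hj, rfl⟩, hx⟩
        rw [hxy j] at hx
        exact ⟨j, hj, Prod.ext rfl (by simpa using hx)⟩
    have hkU : (xy k).1 ∈ U := mem_image_of_mem _ (mem_univ k)
    have hks : decide ((xy k).1 ∈ s) = (xy k).2 := by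
      simp [s, hkU, hxy k]
    by_cases hfresh : (xy k).1 ∈ S.map Prod.fst
    · refine absurd ?_ hσ
      have : (xy k).1 ∈ S.map Prod.fst ∧ h (xy k).1 = some true ↔ (xy k).2 = true := by
        simp [hfresh, hxy k]
      rw [predictor, if_pos hfresh]
      simp only [htrue, this, Bool.decide_eq_true]
    · have hU : insert (xy k).1 (S.map Prod.fst).toFinset = U := by
        ext x
        simp only [mem_insert, List.mem_toFinset, hmemX, U, mem_image, mem_univ, true_and]
        grind
      have hs' : ({z ∈ (S.map Prod.fst).toFinset | (z, true) ∈ S} : Finset X)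
          = s.erase (xy k).1 := by
        ext x
        simp only [mem_filter, List.mem_toFinset, htrue, mem_erase, s, ← hU, mem_insert]
        grind
      rw [predictor, if_neg hfresh, hU, hs', ← hks] at hσ
      refine mem_filter.2 ⟨mem_univ _, mem_filter.2 ⟨hkU, hσ⟩, fun j hj => ?_⟩
      by_contra hjk
      exact hfresh ((hmemX _).2 ⟨j, hjk, hj⟩)
  have hsum := sum_perm_last n fun i => if i ∈ I then (1 : ℝ) else 0
  have hcard : ∑ i, (if i ∈ I then (1 : ℝ) else 0) = #I := by simp
  rw [hcard] at hsum
  have hfac : (0 : ℝ) < (n + 1).factorial := by exact_mod_cast Nat.factorial_pos _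
  have hn : (0 : ℝ) < n + 1 := by positivity
  calc _ ≤ (1 / (n + 1).factorial : ℝ) *
          ∑ σ : Equiv.Perm (Fin (n + 1)), (if σ (Fin.last n) ∈ I then (1 : ℝ) else 0) := by
        refine mul_le_mul_of_nonneg_left (sum_le_sum fun σ _ => ?_) (by positivity)
        split_ifs with h1 h2 h2
        · exact le_rfl
        · exact absurd (herr σ h1) h2
        · exact zero_le_one
        · exact le_rfl
    _ = (#I : ℝ) / (n + 1) := by
        field_simp
        linarith
    _ ≤ (d : ℝ) / (n + 1) := by gcongr
end

section
/- For any set X and any partial concept class H on X with Littlestone dimension LD(H) = d < ∞, there exists an online learning algorithm, i.e. a function A : (X × {0,1})* × X → {0,1}, such that for every T ∈ ℕ and every sequence (x₁,y₁),…,(x_T,y_T) ∈ (X × {0,1})^T that is realizable with respect to H, the number of mistakes satisfies Σ_{t=1}^{T} 1[ A((x₁,y₁),…,(x_{t−1},y_{t−1}); x_t) ≠ y_t ] ≤ d. -/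
/-- `LD(H) ≥ d`: there is a complete binary mistake tree of depth `d`, given by the map `t`
from finite bit-strings (the path so far) to points of `X`, all of whose branches are
realizable w.r.t. `H`. -/
def LDGe {X : Type*} (H : Set (X → Option Bool)) (d : ℕ) : Prop :=
  ∃ t : List Bool → X, ∀ y : Fin d → Bool,
    RealizableSeq H (List.ofFn fun i : Fin d => (t ((List.ofFn y).take i), y i))

/-- `LD(H) = d`. -/
def LDEq {X : Type*} (H : Set (X → Option Bool)) (d : ℕ) : Prop :=
  LDGe H d ∧ ¬ LDGe H (d + 1)

/-- The concepts in `V` that are defined at `x` with value `b`. -/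
def restrictTo {X : Type*} (V : Set (X → Option Bool)) (x : X) (b : Bool) :
    Set (X → Option Bool) :=
  {h ∈ V | h x = some b}

/-- The version space: the concepts in `H` consistent with the sample `S`. -/
def versionSpace {X : Type*} (H : Set (X → Option Bool)) (S : List (X × Bool)) :
    Set (X → Option Bool) :=
  {h ∈ H | ∀ p ∈ S, h p.1 = some p.2}

/-- `V` shatters a mistake tree of depth `n`, by recursion on the root of the tree. -/
def HasTree {X : Type*} : Set (X → Option Bool) → ℕ → Prop
  | V, 0 => V.Nonempty
  | V, n + 1 => ∃ x, ∀ b, HasTree (restrictTo V x b) n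

/-- The Standard Optimal Algorithm. Comparing the sets of attained tree depths, which are initial
segments of `ℕ`, amounts to comparing Littlestone dimensions, infinite values included. -/
noncomputable def soa {X : Type*} (H : Set (X → Option Bool)) (S : List (X × Bool)) (x : X) :
    Bool :=
  open Classical in
  decide (∀ n, HasTree (restrictTo (versionSpace H S) x false) n →
    HasTree (restrictTo (versionSpace H S) x true) n)

theorem HasTree.mono {X : Type*} {V W : Set (X → Option Bool)} {n : ℕ} (hVW : V ⊆ W)
    (hV : HasTree V n) : HasTree W n := by
  induction n generalizing V W with
  | zero => exact Set.Nonempty.mono hVW hV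
  | succ n ih =>
    obtain ⟨x, hx⟩ := hV
    exact ⟨x, fun b => ih (fun h hh => ⟨hVW hh.1, hh.2⟩) (hx b)⟩

theorem HasTree.of_le {X : Type*} {V : Set (X → Option Bool)} {m n : ℕ} (hmn : m ≤ n)
    (hV : HasTree V n) : HasTree V m := by
  induction n, hmn using Nat.le_induction with
  | base => exact hV
  | succ n _ ih =>
    obtain ⟨x, hx⟩ := hV
    exact ih ((hx true).mono fun h hh => hh.1)

theorem HasTree.ldGe {X : Type*} [Nonempty X] {V : Set (X → Option Bool)} {n : ℕ}
    (hV : HasTree V n) : LDGe V n := by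
  induction n generalizing V with
  | zero =>
    obtain ⟨h, hh⟩ := hV
    exact ⟨fun _ => Classical.arbitrary X, fun y => ⟨h, hh, by simp⟩⟩
  | succ n ih =>
    obtain ⟨x, hx⟩ := hV
    choose t ht using fun b => ih (hx b)
    -- Glue the two subtrees below the root `x`.
    refine ⟨fun l => match l with
      | [] => x
      | b :: l => t b l, fun y => ?_⟩
    obtain ⟨h, hh, hS⟩ := ht (y 0) (fun i => y i.succ)
    refine ⟨h, hh.1, ?_⟩
    intro p hp
    rw [List.ofFn_succ, List.mem_cons] at hp
    rcases hp with rfl | hp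
    · simpa using hh.2
    · apply hS
      simpa [List.ofFn_succ] using hp

theorem versionSpace_concat {X : Type*} (H : Set (X → Option Bool)) (S : List (X × Bool))
    (p : X × Bool) :
    versionSpace H (S ++ [p]) = restrictTo (versionSpace H S) p.1 p.2 := by
  ext h
  simp only [versionSpace, restrictTo, List.mem_append, List.mem_singleton, Set.mem_ofPred_eq]
  grind

/-- A mistake of the algorithm costs the version space one level of attainable tree depth: its
Littlestone dimension, when finite, strictly decreases. -/
theorem hasTree_succ_of_mistake {X : Type*} {H : Set (X → Option Bool)} {S : List (X × Bool)}
    {x : X} {y : Bool} {n : ℕ} (hne : soa H S x ≠ y)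
    (hT : HasTree (restrictTo (versionSpace H S) x y) n) :
    HasTree (versionSpace H S) (n + 1) := by
  refine ⟨x, fun b => ?_⟩
  by_cases hb : b = y
  · exact hb ▸ hT
  cases y
  · obtain rfl : b = true := by simpa using hb
    have hs : soa H S x = true := by simpa using hne
    simp only [soa, decide_eq_true_eq] at hs
    exact hs n hT
  · obtain rfl : b = false := by simpa using hb
    have hs : soa H S x = false := by simpa using hne
    rw [soa, decide_eq_false_iff_not] at hs
    push Not at hs
    obtain ⟨m, hm, hm'⟩ := hs
    -- Depth `m` is not attained by the `true` side, so `n < m`: attained depths are downward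
    -- closed.
    have hnm : n ≤ m := by
      by_contra hlt
      exact hm' (hT.of_le (by omega))
    exact hm.of_le hnm

/-- The potential argument, run backwards along the sample: the depth of a tree for the final
version space plus the number of mistakes is the depth of a tree for `H`. -/
theorem hasTree_add_mistakes {X : Type*} (H : Set (X → Option Bool)) (T : ℕ)
    (S : Fin T → X × Bool) (n : ℕ) (hT : HasTree (versionSpace H (List.ofFn S)) n) :
    HasTree H
      (n + ∑ t : Fin T, if soa H ((List.ofFn S).take t.1) (S t).1 ≠ (S t).2 then 1 else 0) := by
  induction T generalizing n with
  | zero => exact hT.mono fun h hh => hh.1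
  | succ T ih =>
    have hS : List.ofFn S = List.ofFn (fun i : Fin T => S i.castSucc) ++ [S (Fin.last T)] :=
      List.ofFn_succ_last
    have htake (k : ℕ) (hk : k ≤ T) : (List.ofFn S).take k
        = (List.ofFn (fun i : Fin T => S i.castSucc)).take k := by
      rw [hS, List.take_append_of_le_length (by simpa using hk)]
    have hlast : (List.ofFn S).take T = List.ofFn (fun i : Fin T => S i.castSucc) := by
      rw [htake T le_rfl, List.take_of_length_le (by simp)]
    rw [hS, versionSpace_concat] at hT
    rw [Fin.sum_univ_castSucc]
    simp only [Fin.val_castSucc, Fin.val_last, hlast]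
    simp only [fun i : Fin T => htake i.1 i.2.le]
    rw [add_comm (Finset.sum _ _), ← add_assoc]
    apply ih
    split_ifs with hne
    · exact hasTree_succ_of_mistake hne hT
    · exact hT.mono fun h hh => hh.1

/-- realizable online learning, upper bound: if `LD(H) = d < ∞` there is
an online learner making at most `d` mistakes on every realizable sequence. -/
theorem online_mistake_bound_of_finite_littlestone {X : Type*}
    (H : Set (X → Option Bool)) (d : ℕ) (hLD : LDEq H d) :
    ∃ A : List (X × Bool) → X → Bool,
      ∀ (T : ℕ) (S : Fin T → X × Bool), RealizableSeq H (List.ofFn S) →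
        (∑ t : Fin T, if A ((List.ofFn S).take t.1) (S t).1 ≠ (S t).2 then 1 else 0) ≤ d := by
  obtain ⟨⟨t, _⟩, hd⟩ := hLD
  have : Nonempty X := ⟨t []⟩
  refine ⟨soa H, fun T S hS => ?_⟩
  have hV : HasTree (versionSpace H (List.ofFn S)) 0 := hS
  have hT := hasTree_add_mistakes H T S 0 hV
  rw [zero_add] at hT
  by_contra hlt
  exact hd (hT.of_le (by omega)).ldGe
end

section
/- For any set X, any partial concept class H on X, any finite d with 1 ≤ d ≤ LD(H), and any function A : (X × {0,1})* × X → {0,1}, there exists a sequence (x₁,y₁),…,(x_d,y_d) ∈ (X × {0,1})^d that is realizable with respect to H and on which A makes at least d/2 mistakes: Σ_{t=1}^{d} 1[ A((x₁,y₁),…,(x_{t−1},y_{t−1}); x_t) ≠ y_t ] ≥ d/2. -/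
/-- The adversary's play after `n` rounds against the learner `A` on the tree `t`: the path followed
in the tree, together with the labeled sample revealed so far. -/
def adversary {X : Type*} (t : List Bool → X) (A : List (X × Bool) → X → Bool) :
    ℕ → List Bool × List (X × Bool)
  | 0 => ([], [])
  | n + 1 =>
    let P := adversary t A n
    let y := !A P.2 (t P.1)
    (P.1 ++ [y], P.2 ++ [(t P.1, y)])

/-- The labeled example the adversary reveals in round `n`. -/
def advExample {X : Type*} (t : List Bool → X) (A : List (X × Bool) → X → Bool) (n : ℕ) :
    X × Bool :=
  (t (adversary t A n).1, !A (adversary t A n).2 (t (adversary t A n).1))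

theorem adversary_fst {X : Type*} (t : List Bool → X) (A : List (X × Bool) → X → Bool) (n : ℕ) :
    (adversary t A n).1 = (List.range n).map fun i => (advExample t A i).2 := by
  induction n with
  | zero => rfl
  | succ n ih =>
    rw [List.range_succ, List.map_append, ← ih]
    rfl

theorem adversary_snd {X : Type*} (t : List Bool → X) (A : List (X × Bool) → X → Bool) (n : ℕ) :
    (adversary t A n).2 = (List.range n).map (advExample t A) := by
  induction n with
  | zero => rfl
  | succ n ih =>
    rw [List.range_succ, List.map_append, ← ih]
    rfl

theorem take_ofFn_val {α : Type*} (f : ℕ → α) {d i : ℕ} (hi : i ≤ d) :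
    (List.ofFn fun j : Fin d => f j).take i = (List.range i).map f := by
  apply List.ext_getElem
  · simp [hi]
  · intro n h₁ h₂
    simp

/-- realizable online learning, lower bound: for any `1 ≤ d ≤ LD(H)` and
any online learner `A`, there is a realizable sequence of length `d` on which `A` makes
at least `d/2` mistakes. -/
theorem online_mistake_lower_bound {X : Type*} (H : Set (X → Option Bool)) (d : ℕ)
    (hd : 1 ≤ d) (hLD : LDGe H d) (A : List (X × Bool) → X → Bool) :
    ∃ S : Fin d → X × Bool, RealizableSeq H (List.ofFn S) ∧
      (d : ℝ) / 2 ≤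
        ∑ t : Fin d, if A ((List.ofFn S).take t.1) (S t).1 ≠ (S t).2 then (1 : ℝ) else 0 := by
  obtain ⟨t, ht⟩ := hLD
  refine ⟨fun i => advExample t A i, ?_, ?_⟩
  · have key := ht fun i => (advExample t A i).2
    have hbranch : (fun i : Fin d =>
        (t ((List.ofFn fun j : Fin d => (advExample t A j).2).take i), (advExample t A i).2)) =
        fun i : Fin d => advExample t A i := by
      funext i
      rw [take_ofFn_val (fun j => (advExample t A j).2) i.2.le, ← adversary_fst]
      rfl
    rwa [hbranch] at key
  · have hmistake : ∀ i : Fin d,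
        A ((List.ofFn fun j : Fin d => advExample t A j).take i) (advExample t A i).1 ≠
          (advExample t A i).2 := by
      intro i
      rw [take_ofFn_val (advExample t A) i.2.le, ← adversary_snd]
      simp [advExample]
    rw [Finset.sum_congr rfl fun i _ => if_pos (hmistake i)]
    simp
end

section
/- For any set X, any partial concept class H on X, any finite d with 1 ≤ d ≤ LD(H), any T ∈ ℕ with T ≥ d, and any prediction functions f_t : X^t × {0,1}^{t−1} → [0,1] for t = 1,…,T, there exists a sequence (x₁,y₁),…,(x_T,y_T) ∈ (X × {0,1})^T such that Σ_{t=1}^{T} | f_t(x₁,…,x_t, y₁,…,y_{t−1}) − y_t | ≥ inf_{h ∈ H} Σ_{t=1}^{T} 1[ h(x_t) ≠ y_t ] + (1/4) · √(d · T). (Here h(x_t) = ⋆ counts as a mistake for h.) -/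
/-- The number of mistakes of `h ∈ H` on the sequence `S` (with `⋆` counting as a mistake),
as a real number. -/
noncomputable def mistakeCount {X : Type*} {T : ℕ} (S : Fin T → X × Bool)
    (h : X → Option Bool) : ℝ :=
  ∑ t : Fin T, if h (S t).1 ≠ some (S t).2 then (1 : ℝ) else 0

namespace OnlineRegret

open Finset

/-- The sign of a label: `1` for `true` and `-1` for `false`. -/
def sgn (b : Bool) : ℝ := if b then 1 else -1

/-- The conditional expectation of `a S² - b S⁴`, where `S` is `s` plus a sum of `m` independent
uniform signs. -/
def pot (a b s m : ℝ) : ℝ := a * (s ^ 2 + m) - b * (s ^ 4 + 6 * s ^ 2 * m + 3 * m ^ 2 - 2 * m)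

/-- The block of round `t` when `T` rounds are split into `d` blocks of nearly equal size. -/
def blk (d T t : ℕ) : ℕ := t * d / T

/-- The signed sum of the labels of block `i` among the first `n` rounds. -/
def blockSum (d T i n : ℕ) (y : ℕ → Bool) : ℝ :=
  ∑ t ∈ range n, if blk d T t = i then sgn (y t) else 0

/-- The number of rounds of block `i` from round `n` on, as a real number. -/
def remaining (d T i n : ℕ) : ℝ :=
  ∑ t ∈ Ico n T, if blk d T t = i then (1 : ℝ) else 0

/-- The total potential after `n` rounds. -/
def totalPot (d T : ℕ) (a b : ℝ) (n : ℕ) (y : ℕ → Bool) : ℝ :=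
  ∑ i ∈ range d, pot a b (blockSum d T i n y) (remaining d T i n)

/-- The majority label of block `i`, with ties broken towards `true`. -/
noncomputable def maj (d T i : ℕ) (y : ℕ → Bool) : Bool := decide (0 ≤ blockSum d T i T y)

lemma pot_step (a b s m : ℝ) :
    pot a b (s + sgn true) m + pot a b (s + sgn false) m = 2 * pot a b s (m + 1) := by
  simp only [pot, sgn, if_true, Bool.false_eq_true, if_false]
  ring

/-- The constants make the quartic touch `|s| / 2` at `|s| = 2 * c`. -/
lemma minorant_le_abs {c : ℝ} (hc : 0 < c) (s : ℝ) :
    pot (3 / (8 * c)) (1 / (32 * c ^ 3)) s 0 ≤ |s| / 2 := by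
  have h1 : |s| / 2 - pot (3 / (8 * c)) (1 / (32 * c ^ 3)) s 0
      = |s| * ((|s| - 2 * c) ^ 2 * (|s| + 4 * c)) / (32 * c ^ 3) := by
    have h2 : s ^ 2 = |s| ^ 2 := (sq_abs s).symm
    have h4 : s ^ 4 = |s| ^ 4 := by rw [show s ^ 4 = (s ^ 2) ^ 2 by ring, h2]; ring
    simp only [pot, h2, h4]
    field_simp
    ring
  have h3 : 0 ≤ |s| * ((|s| - 2 * c) ^ 2 * (|s| + 4 * c)) / (32 * c ^ 3) := by positivity
  linarith

lemma blockSum_congr {d T i n : ℕ} {y y' : ℕ → Bool}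
    (h : ∀ t < n, blk d T t = i → y t = y' t) : blockSum d T i n y = blockSum d T i n y' := by
  refine sum_congr rfl fun t ht => ?_
  split_ifs with hb
  · rw [h t (mem_range.1 ht) hb]
  · rfl

lemma blockSum_succ_update (d T i n : ℕ) (y : ℕ → Bool) (v : Bool) :
    blockSum d T i (n + 1) (Function.update y n v)
      = blockSum d T i n y + if blk d T n = i then sgn v else 0 := by
  have h : blockSum d T i n (Function.update y n v) = blockSum d T i n y :=
    blockSum_congr fun t ht _ => Function.update_of_ne ht.ne _ _
  rw [← h]
  simp [blockSum, sum_range_succ]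

lemma remaining_succ {T n : ℕ} (d i : ℕ) (hn : n < T) :
    remaining d T i n = remaining d T i (n + 1) + if blk d T n = i then 1 else 0 := by
  rw [remaining, remaining, ← sum_Ioo_add_eq_sum_Ico hn]
  rfl

lemma totalPot_step {d T n : ℕ} (hn : n < T) (a b : ℝ) (y : ℕ → Bool) :
    totalPot d T a b (n + 1) (Function.update y n true)
      + totalPot d T a b (n + 1) (Function.update y n false) = 2 * totalPot d T a b n y := by
  simp only [totalPot]
  rw [← sum_add_distrib, mul_sum]
  refine sum_congr rfl fun i _ => ?_
  rw [blockSum_succ_update, blockSum_succ_update, remaining_succ d i hn]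
  split_ifs
  · exact pot_step _ _ _ _
  · simp only [add_zero]; ring

/-- Labels chosen greedily keep loss plus potential from dropping, against any predictor `g` whose
round-`t` prediction depends only on the labels before round `t`. -/
lemma exists_labels (d T : ℕ) (a b : ℝ) (g : ℕ → (ℕ → Bool) → ℝ)
    (hg : ∀ t y, g t y ∈ Set.Icc (0 : ℝ) 1)
    (hdep : ∀ t y y', (∀ i < t, y i = y' i) → g t y = g t y') {n : ℕ} (hn : n ≤ T) :
    ∃ y : ℕ → Bool, totalPot d T a b 0 (fun _ => true) + n / 2 ≤
      ∑ t ∈ range n, |g t y - (if y t then 1 else 0)| + totalPot d T a b n y := by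
  induction n with
  | zero => exact ⟨fun _ => true, by simp⟩
  | succ n ih =>
    obtain ⟨y, hy⟩ := ih (by omega)
    have hstep := totalPot_step (d := d) (show n < T by omega) a b y
    have hloss : ∀ v, ∑ t ∈ range (n + 1), |g t (Function.update y n v) -
          (if Function.update y n v t then 1 else 0)|
        = ∑ t ∈ range n, |g t y - (if y t then 1 else 0)| + |g n y - (if v then 1 else 0)| := by
      intro v
      rw [sum_range_succ]
      congr 1
      · refine sum_congr rfl fun t ht => ?_
        have ht := mem_range.1 ht
        rw [hdep t (Function.update y n v) y fun i hi =>
          Function.update_of_ne (by omega) _ _, Function.update_of_ne (by omega)]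
      · rw [hdep n (Function.update y n v) y fun i hi =>
          Function.update_of_ne (by omega) _ _, Function.update_self]
    obtain ⟨h0, h1⟩ := hg n y
    have ht : |g n y - (if true then 1 else 0)| = 1 - g n y := by
      rw [if_pos rfl, abs_of_nonpos (by linarith)]; ring
    have hf : |g n y - (if false then 1 else 0)| = g n y := by
      simp [abs_of_nonneg h0]
    by_contra! hcon
    have c1 := hcon (Function.update y n true)
    have c2 := hcon (Function.update y n false)
    rw [hloss] at c1 c2
    rw [ht] at c1
    rw [hf] at c2
    push_cast at c1 c2
    linarith

lemma blk_lt {d T t : ℕ} (hd : 1 ≤ d) (ht : t < T) : blk d T t < d := by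
  rw [blk, Nat.div_lt_iff_lt_mul (by omega), mul_comm d T]
  exact Nat.mul_lt_mul_of_pos_right ht hd

lemma lt_of_blk_lt {d T t t' : ℕ} (h : blk d T t' < blk d T t) : t' < t := by
  by_contra! hle
  exact absurd (Nat.div_le_div_right (Nat.mul_le_mul_right d hle)) (not_le.2 h)

/-- Every block has `T / d` or `T / d + 1` rounds; in polynomial form. -/
lemma remaining_zero {d T i : ℕ} (hd : 1 ≤ d) (hT : d ≤ T) (hi : i < d) :
    (remaining d T i 0 - (T / d : ℕ)) * (remaining d T i 0 - ((T / d : ℕ) + 1)) = 0 := by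
  -- The rounds of block `i` run from `⌈i T / d⌉` to `⌈(i + 1) T / d⌉ - 1`.
  have hset : (Ico 0 T).filter (fun t => blk d T t = i)
      = Ico ((i * T + d - 1) / d) (((i + 1) * T + d - 1) / d) := by
    ext t
    have e1 : (i * T + d - 1) / d ≤ t ↔ i * T ≤ t * d := by
      rw [← Nat.lt_succ_iff, Nat.div_lt_iff_lt_mul (by omega), Nat.succ_mul]; omega
    have e2 : t < ((i + 1) * T + d - 1) / d ↔ t * d < (i + 1) * T := by
      rw [Nat.lt_iff_add_one_le, Nat.le_div_iff_mul_le (by omega), Nat.succ_mul]; omega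
    have e3 : blk d T t = i ↔ i * T ≤ t * d ∧ t * d < (i + 1) * T := by
      have h1 : i ≤ blk d T t ↔ i * T ≤ t * d := Nat.le_div_iff_mul_le (by omega)
      have h2 : blk d T t < i + 1 ↔ t * d < (i + 1) * T := Nat.div_lt_iff_lt_mul (by omega)
      rw [← h1, ← h2]; omega
    simp only [mem_filter, mem_Ico, e1, e2, e3]
    refine ⟨fun h => h.2, fun h => ⟨⟨Nat.zero_le _, ?_⟩, h⟩⟩
    have h3 : (i + 1) * T ≤ d * T := Nat.mul_le_mul_right T hi
    exact lt_of_mul_lt_mul_right (by linarith [h.2] : t * d < T * d) (Nat.zero_le d)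
  have hcard : remaining d T i 0
      = ((((i + 1) * T + d - 1) / d - (i * T + d - 1) / d : ℕ) : ℝ) := by
    rw [remaining, sum_boole, hset, Nat.card_Ico]
  have hsize : ((i + 1) * T + d - 1) / d - (i * T + d - 1) / d = T / d ∨
      ((i + 1) * T + d - 1) / d - (i * T + d - 1) / d = T / d + 1 := by
    have h1 : (i + 1) * T + d - 1 = (i * T + d - 1) + T := by rw [Nat.succ_mul]; omega
    rw [h1, Nat.add_div (by omega)]
    generalize (i * T + d - 1) / d = u
    generalize T / d = k
    split_ifs <;> omega
  rcases hsize with h | h <;> rw [hcard, h] <;> push_cast <;> ring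

lemma sum_remaining {d T : ℕ} (hd : 1 ≤ d) :
    ∑ i ∈ range d, remaining d T i 0 = T := by
  simp only [remaining]
  rw [sum_comm]
  have : ∀ t ∈ Ico 0 T, (∑ i ∈ range d, if blk d T t = i then (1 : ℝ) else 0) = 1 := by
    intro t ht
    rw [sum_ite_eq, if_pos (mem_range.2 (blk_lt hd (mem_Ico.1 ht).2))]
  rw [sum_congr rfl this]
  simp

lemma sum_sq_blockSize {d T : ℕ} (hd : 1 ≤ d) (hT : d ≤ T) :
    3 * d * ∑ i ∈ range d, remaining d T i 0 ^ 2 ≤ 4 * (T : ℝ) ^ 2 := by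
  have hk : (1 : ℝ) ≤ (T / d : ℕ) := by
    exact_mod_cast (Nat.one_le_div_iff (by omega)).2 hT
  have hd' : (1 : ℝ) ≤ d := by exact_mod_cast hd
  have hsq : ∑ i ∈ range d, remaining d T i 0 ^ 2
      = (2 * (T / d : ℕ) + 1) * T - d * ((T / d : ℕ) * ((T / d : ℕ) + 1)) := by
    rw [← sum_remaining (T := T) hd, mul_sum]
    have hc : (d : ℝ) * ((T / d : ℕ) * ((T / d : ℕ) + 1))
      = ∑ i ∈ range d, ((T / d : ℕ) * ((T / d : ℕ) + 1) : ℝ) := by simp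
    rw [hc, ← sum_sub_distrib]
    refine sum_congr rfl fun i hi => ?_
    linear_combination remaining_zero hd hT (mem_range.1 hi)
  rw [hsq]
  generalize ((T / d : ℕ) : ℝ) = k at hk
  -- Sixteen times the difference of the sides, completed to a square in `T`.
  nlinarith [sq_nonneg (8 * (T : ℝ) - 3 * d * (2 * k + 1)),
    mul_nonneg (sq_nonneg (d : ℝ)) (show (0 : ℝ) ≤ 12 * (k ^ 2 + k) - 9 by nlinarith)]

lemma totalPot_zero_ge {d T : ℕ} (hd : 1 ≤ d) (hT : d ≤ T) (y : ℕ → Bool) :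
    1 / 4 * √((d : ℝ) * T) ≤
      totalPot d T (3 / (8 * √((T : ℝ) / d))) (1 / (32 * √((T : ℝ) / d) ^ 3)) 0 y := by
  have hd' : (0 : ℝ) < d := by exact_mod_cast hd
  have hT' : (0 : ℝ) < T := by exact_mod_cast (by omega : 0 < T)
  set c := √((T : ℝ) / d) with hc
  have hc0 : 0 < c := Real.sqrt_pos.2 (by positivity)
  have hc2 : c ^ 2 * d = T := by
    rw [hc, Real.sq_sqrt (by positivity)]; field_simp
  have hs : √((d : ℝ) * T) = c * d := by
    rw [← hc2, show (d : ℝ) * (c ^ 2 * d) = (c * d) ^ 2 by ring, Real.sqrt_sq (by positivity)]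
  have hsum := sum_remaining (T := T) hd
  have hsq := sum_sq_blockSize hd hT
  have hV : totalPot d T (3 / (8 * c)) (1 / (32 * c ^ 3)) 0 y
      = 3 / (8 * c) * T
        - 1 / (32 * c ^ 3) * (3 * (∑ i ∈ range d, remaining d T i 0 ^ 2) - 2 * T) := by
    rw [← hsum]
    simp only [totalPot, blockSum, range_zero, sum_empty, pot, mul_sum, ← sum_sub_distrib]
    refine sum_congr rfl fun i _ => ?_
    ring
  rw [hV, hs]
  generalize ∑ i ∈ range d, remaining d T i 0 ^ 2 = Q at hsq
  rw [← hc2] at hsq ⊢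
  have hQ : 3 * Q ≤ 4 * (c ^ 4 * d) := by
    refine le_of_mul_le_mul_left ?_ hd'
    linarith
  have hdiff : 3 / (8 * c) * (c ^ 2 * d) - 1 / (32 * c ^ 3) * (3 * Q - 2 * (c ^ 2 * d))
      - 1 / 4 * (c * d) = (4 * (c ^ 4 * d) - 3 * Q + 2 * (c ^ 2 * d)) / (32 * c ^ 3) := by
    field_simp
    ring
  have : 0 ≤ (4 * (c ^ 4 * d) - 3 * Q + 2 * (c ^ 2 * d)) / (32 * c ^ 3) := by
    have : 0 ≤ c ^ 2 * d := by positivity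
    exact div_nonneg (by linarith) (by positivity)
  linarith

lemma sgn_maj_mul (d T i : ℕ) (y : ℕ → Bool) :
    sgn (maj d T i y) * blockSum d T i T y = |blockSum d T i T y| := by
  by_cases h : 0 ≤ blockSum d T i T y
  · simp [maj, sgn, h, abs_of_nonneg]
  · simp [maj, sgn, h, abs_of_neg (not_le.1 h)]

/-- Predicting the majority label of each block errs exactly on the minority rounds. -/
lemma sum_minority {d T : ℕ} (hd : 1 ≤ d) (y : ℕ → Bool) :
    ∑ t ∈ range T, (if maj d T (blk d T t) y ≠ y t then (1 : ℝ) else 0)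
      = T / 2 - ∑ i ∈ range d, |blockSum d T i T y| / 2 := by
  have h1 : ∀ u v : Bool, (if u ≠ v then (1 : ℝ) else 0) = 1 / 2 - sgn u * sgn v / 2 := by
    intro u v
    cases u <;> cases v <;> norm_num [sgn]
  have h2 : ∑ i ∈ range d, |blockSum d T i T y| / 2
      = ∑ t ∈ range T, sgn (maj d T (blk d T t) y) * sgn (y t) / 2 := by
    have : ∀ i, |blockSum d T i T y| / 2
        = ∑ t ∈ range T, if blk d T t = i then sgn (maj d T i y) * sgn (y t) / 2 else 0 := by
      intro i
      rw [← sgn_maj_mul, blockSum, mul_sum, sum_div]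
      refine sum_congr rfl fun t _ => ?_
      split_ifs <;> simp
    simp only [this]
    rw [sum_comm]
    refine sum_congr rfl fun t ht => ?_
    rw [sum_ite_eq, if_pos (mem_range.2 (blk_lt hd (mem_range.1 ht)))]
  rw [h2]
  simp only [h1]
  rw [sum_sub_distrib]
  simp [div_eq_mul_inv]

/-- The majority labels that determine the tree node shown in round `t` depend only on the labels
of earlier rounds. -/
lemma take_maj_congr {d T t : ℕ} {y y' : ℕ → Bool} (h : ∀ i < t, y i = y' i) :
    (List.ofFn fun i : Fin d => maj d T i y).take (blk d T t)
      = (List.ofFn fun i : Fin d => maj d T i y').take (blk d T t) := by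
  refine List.ext_getElem (by simp) fun j hj _ => ?_
  simp only [List.length_take, List.length_ofFn, lt_min_iff] at hj
  simp only [List.getElem_take, List.getElem_ofFn, maj]
  rw [blockSum_congr fun s _ hs => h s (lt_of_blk_lt (hs ▸ hj.1))]

end OnlineRegret

/-- agnostic online learning, lower bound: for any `1 ≤ d ≤ LD(H)`,
any horizon `T ≥ d`, and any `[0,1]`-valued prediction functions (`f t` receives
`x₁,…,x_t` and `y₁,…,y_{t-1}`), there is a sequence on which the predictor's expected
number of mistakes exceeds that of the best `h ∈ H` by at least `(1/4)·√(d·T)`. -/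
theorem agnostic_online_regret_lower_bound {X : Type*} (H : Set (X → Option Bool))
    (d : ℕ) (hd : 1 ≤ d) (hLD : LDGe H d) (T : ℕ) (hT : d ≤ T)
    (f : ℕ → List X → List Bool → ℝ)
    (hf : ∀ t xs ys, f t xs ys ∈ Set.Icc (0 : ℝ) 1) :
    ∃ S : Fin T → X × Bool,
      sInf ((fun h => mistakeCount S h) '' H) + (1 / 4 : ℝ) * Real.sqrt ((d : ℝ) * T) ≤
        ∑ t : Fin T,
          |f t.1 ((List.ofFn fun i => (S i).1).take (t.1 + 1))
              ((List.ofFn fun i => (S i).2).take t.1) -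
            (if (S t).2 then 1 else 0)| := by
  classical
  obtain ⟨tree, htree⟩ := hLD
  let x : ℕ → (ℕ → Bool) → X := fun t y =>
    tree ((List.ofFn fun i : Fin d => OnlineRegret.maj d T i y).take (OnlineRegret.blk d T t))
  have hx : ∀ t y y', (∀ i < t, y i = y' i) → x t y = x t y' := fun t y y' h =>
    congrArg tree (OnlineRegret.take_maj_congr h)
  let g : ℕ → (ℕ → Bool) → ℝ := fun t y =>
    f t ((List.ofFn fun i : Fin T => x i y).take (t + 1))
      ((List.ofFn fun i : Fin T => y i).take t)
  have hg : ∀ t y y', (∀ i < t, y i = y' i) → g t y = g t y' := by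
    intro t y y' h
    have e1 : (List.ofFn fun i : Fin T => x i y).take (t + 1)
        = (List.ofFn fun i : Fin T => x i y').take (t + 1) := by
      refine List.ext_getElem (by simp) fun j hj _ => ?_
      simp only [List.length_take, List.length_ofFn, lt_min_iff] at hj
      simp only [List.getElem_take, List.getElem_ofFn]
      exact hx j y y' fun i hi => h i (by omega)
    have e2 : (List.ofFn fun i : Fin T => y i).take t
        = (List.ofFn fun i : Fin T => y' i).take t := by
      refine List.ext_getElem (by simp) fun j hj _ => ?_
      simp only [List.length_take, List.length_ofFn, lt_min_iff] at hj
      simp only [List.getElem_take, List.getElem_ofFn]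
      exact h j hj.1
    simp only [g, e1, e2]
  have hc : 0 < √((T : ℝ) / d) := by
    have : (0 : ℝ) < d := by exact_mod_cast hd
    have : (0 : ℝ) < T := by exact_mod_cast (by omega : 0 < T)
    exact Real.sqrt_pos.2 (by positivity)
  obtain ⟨y, hy⟩ := OnlineRegret.exists_labels d T (3 / (8 * √((T : ℝ) / d)))
    (1 / (32 * √((T : ℝ) / d) ^ 3)) g (fun t y => hf _ _ _) hg le_rfl
  have hstart := OnlineRegret.totalPot_zero_ge hd hT (fun _ => true)
  have hend : OnlineRegret.totalPot d T (3 / (8 * √((T : ℝ) / d)))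
      (1 / (32 * √((T : ℝ) / d) ^ 3)) T y
      ≤ ∑ i ∈ Finset.range d, |OnlineRegret.blockSum d T i T y| / 2 := by
    refine Finset.sum_le_sum fun i _ => ?_
    rw [show OnlineRegret.remaining d T i T = 0 by simp [OnlineRegret.remaining]]
    exact OnlineRegret.minorant_le_abs hc _
  refine ⟨fun t => (x t y, y t), ?_⟩
  obtain ⟨h, hH, hh⟩ := htree fun i => OnlineRegret.maj d T i y
  have hval : ∀ t < T, h (x t y) = some (OnlineRegret.maj d T (OnlineRegret.blk d T t) y) := by
    intro t ht
    exact hh _ ((List.mem_ofFn' _ _).2 ⟨⟨_, OnlineRegret.blk_lt hd ht⟩, rfl⟩)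
  have hmis : mistakeCount (fun t : Fin T => (x t y, y t)) h
      = T / 2 - ∑ i ∈ Finset.range d, |OnlineRegret.blockSum d T i T y| / 2 := by
    rw [← OnlineRegret.sum_minority hd, ← Fin.sum_univ_eq_sum_range
      (fun t => if OnlineRegret.maj d T (OnlineRegret.blk d T t) y ≠ y t then (1 : ℝ) else 0)]
    refine Finset.sum_congr rfl fun t _ => ?_
    simp only [hval t t.2, ne_eq, Option.some.injEq]
  have hinf : sInf ((fun h => mistakeCount (fun t : Fin T => (x t y, y t)) h) '' H)
      ≤ mistakeCount (fun t : Fin T => (x t y, y t)) h := by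
    refine csInf_le ⟨0, ?_⟩ ⟨h, hH, rfl⟩
    rintro _ ⟨h', -, rfl⟩
    refine Finset.sum_nonneg fun t _ => ?_
    split_ifs <;> norm_num
  rw [← Fin.sum_univ_eq_sum_range (fun t => |g t y - (if y t then 1 else 0)|)] at hy
  simp only [g] at hy
  linarith
end

section
/- Let G = (V,E) be a finite simple graph with at least one edge, and let B₁,…,Bₙ be complete bipartite subgraphs of G, where Bᵢ has disjoint vertex sides Lᵢ, Rᵢ ⊆ V and edge set Eᵢ = {{u,v} : u ∈ Lᵢ, v ∈ Rᵢ}, such that E₁,…,Eₙ partition E. For each v ∈ V define the partial concept c_v : {1,…,n} → {0,1,⋆} by c_v(i) = 0 if v ∈ Lᵢ, c_v(i) = 1 if v ∈ Rᵢ, and c_v(i) = ⋆ otherwise, and let H = {c_v : v ∈ V}. Then for every pair of distinct coordinates i, j ∈ {1,…,n}, the set of binary patterns {(h(i),h(j)) : h ∈ H} ∩ {0,1}² has size at most 2; consequently VC(H) = 1 and TD(H) ≤ 2. -/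
/-- `TD(H) ≥ d`: there are points `x₁,…,x_d` and concepts `h₁,…,h_d ∈ H`
with `hᵢ(xⱼ) = 1[i ≤ j]`. -/
def ThresholdGe {X : Type*} (H : Set (X → Option Bool)) (d : ℕ) : Prop :=
  ∃ (x : Fin d → X) (h : Fin d → X → Option Bool),
    (∀ i, h i ∈ H) ∧ ∀ i j : Fin d, h i (x j) = some (decide (i ≤ j))

section Helpers

variable {V : Type*} [DecidableEq V]

theorem side_of_value {S T : Finset V} {v : V} {b : Bool}
    (h : (if v ∈ S then some false else if v ∈ T then some true else none) = some b) :
    (b = false ∧ v ∈ S) ∨ (b = true ∧ v ∈ T) := by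
  split_ifs at h <;> simp_all

/-- Two vertices take opposite binary values on at most one coordinate: each such coordinate is
the unique part of the partition containing the edge between them. -/
theorem eq_of_opposite {G : SimpleGraph V} {n : ℕ} {L R : Fin n → Finset V}
    (hsub : ∀ i, ∀ u ∈ L i, ∀ v ∈ R i, G.Adj u v)
    (hpart : ∀ u v, G.Adj u v →
      ∃! i : Fin n, (u ∈ L i ∧ v ∈ R i) ∨ (u ∈ R i ∧ v ∈ L i))
    {c : V → Fin n → Option Bool}
    (hc : c = fun v i => if v ∈ L i then some false else if v ∈ R i then some true else none)
    {u v : V} {i j : Fin n} {a b : Bool}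
    (hui : c u i = some a) (hvi : c v i = some (!a))
    (huj : c u j = some b) (hvj : c v j = some (!b)) : i = j := by
  subst hc
  have key : ∀ {k : Fin n} {e : Bool},
      (if u ∈ L k then some false else if u ∈ R k then some true else none) = some e →
      (if v ∈ L k then some false else if v ∈ R k then some true else none) = some (!e) →
      (u ∈ L k ∧ v ∈ R k) ∨ (u ∈ R k ∧ v ∈ L k) := by
    intro k e h₁ h₂
    have h₁ := side_of_value h₁
    have h₂ := side_of_value h₂
    cases e <;> simp_all
  have hi := key hui hvi
  have hadj : G.Adj u v := by
    rcases hi with ⟨hu, hv⟩ | ⟨hu, hv⟩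
    · exact hsub i u hu v hv
    · exact (hsub i v hv u hu).symm
  exact (hpart u v hadj).unique hi (key huj hvj)

/-- A set of binary pairs containing no two complementary pairs has at most two elements, since
exclusive or is then injective on it. -/
theorem ncard_le_two_of_no_antipodal (S : Set (Bool × Bool))
    (hS : ∀ p ∈ S, (!p.1, !p.2) ∉ S) : S.ncard ≤ 2 := by
  have hinj : Set.InjOn (fun p : Bool × Bool => xor p.1 p.2) S := by
    rintro ⟨a, b⟩ hp ⟨a', b'⟩ hq h
    have := hS _ hp
    cases a <;> cases b <;> cases a' <;> cases b' <;> simp_all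
  have h := Set.ncard_le_ncard_of_injOn (t := Set.univ) _ (fun _ _ => Set.mem_univ _) hinj
  simpa [Set.ncard_univ] using h

end Helpers

/-- given a finite simple graph `G` with at least one edge whose edge set is
partitioned by the complete bipartite graphs `Bᵢ = (Lᵢ, Rᵢ)`, the partial concept class
`H = {c_v : v ∈ V}` (with `c_v(i) = 0` if `v ∈ Lᵢ`, `1` if `v ∈ Rᵢ`, `⋆` otherwise)
realizes at most two binary patterns on every pair of coordinates; consequently
`VC(H) = 1` and `TD(H) ≤ 2`. -/
theorem bipartite_partition_class_two_patterns {V : Type*} [Fintype V] [DecidableEq V]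
    (G : SimpleGraph V) (hE : ∃ u v, G.Adj u v)
    (n : ℕ) (L R : Fin n → Finset V)
    (hdisj : ∀ i, Disjoint (L i) (R i))
    (hsub : ∀ i, ∀ u ∈ L i, ∀ v ∈ R i, G.Adj u v)
    (hpart : ∀ u v, G.Adj u v →
      ∃! i : Fin n, (u ∈ L i ∧ v ∈ R i) ∨ (u ∈ R i ∧ v ∈ L i)) :
    let c : V → Fin n → Option Bool := fun v i =>
      if v ∈ L i then some false else if v ∈ R i then some true else none
    let H : Set (Fin n → Option Bool) := Set.range c
    (∀ i j : Fin n, i ≠ j →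
        Set.ncard {p : Bool × Bool | ∃ h ∈ H, h i = some p.1 ∧ h j = some p.2} ≤ 2) ∧
      VCDimEq H 1 ∧ ¬ ThresholdGe H 3 := by
  intro c H
  have opp : ∀ {u v : V} {i j : Fin n} {a b : Bool}, c u i = some a → c v i = some (!a) →
      c u j = some b → c v j = some (!b) → i = j :=
    fun h₁ h₂ h₃ h₄ => eq_of_opposite hsub hpart rfl h₁ h₂ h₃ h₄
  refine ⟨?_, ⟨?_, ?_⟩, ?_⟩
  · intro i j hij
    apply ncard_le_two_of_no_antipodal
    rintro ⟨a, b⟩ ⟨_, ⟨u, rfl⟩, hui, huj⟩ ⟨_, ⟨v, rfl⟩, hvi, hvj⟩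
    exact hij (opp hui hvi huj hvj)
  · obtain ⟨u, v, huv⟩ := hE
    obtain ⟨i, hi, -⟩ := hpart u v huv
    obtain ⟨x, hx, y, hy⟩ : ∃ x ∈ L i, ∃ y, y ∈ R i := by
      rcases hi with ⟨hu, hv⟩ | ⟨hu, hv⟩
      · exact ⟨u, hu, v, hv⟩
      · exact ⟨v, hv, u, hu⟩
    -- Disjointness matters here: the definition of `c` tests membership in `L i` first.
    have hyL : y ∉ L i := Finset.disjoint_right.mp (hdisj i) hy
    refine ⟨{i}, fun f => ?_, Finset.card_singleton i⟩
    cases hf : f i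
    · exact ⟨c x, ⟨x, rfl⟩, by simp [c, hx, hf]⟩
    · exact ⟨c y, ⟨y, rfl⟩, by simp [c, hy, hyL, hf]⟩
  · intro U hU
    refine Finset.card_le_one.mpr fun i hi j hj => ?_
    obtain ⟨_, ⟨u, rfl⟩, hu⟩ := hU fun _ => false
    obtain ⟨_, ⟨v, rfl⟩, hv⟩ := hU fun _ => true
    exact opp (hu i hi) (hv i hi) (hu j hj) (hv j hj)
  · rintro ⟨x, h, hH, hx⟩
    -- `h 0` and `h 2` are `11` and `00` on the points `x 0`, `x 1`, which `h 1` separates.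
    obtain ⟨u, hu⟩ := hH 0
    obtain ⟨v, hv⟩ := hH 2
    have h01 : x 0 = x 1 := by
      refine opp (u := u) (v := v) (a := true) (b := true) ?_ ?_ ?_ ?_
      · rw [hu, hx]; rfl
      · rw [hv, hx]; rfl
      · rw [hu, hx]; rfl
      · rw [hv, hx]; rfl
    have h10 := hx 1 0
    rw [h01, hx 1 1] at h10
    simp at h10
end

section
/- Let G = (V,E) be a finite simple graph and let B₁,…,Bₙ be complete bipartite subgraphs with disjoint sides Lᵢ, Rᵢ ⊆ V whose edge sets partition E. For each v ∈ V define c_v : {1,…,n} → {0,1,⋆} by c_v(i) = 0 if v ∈ Lᵢ, c_v(i) = 1 if v ∈ Rᵢ, and c_v(i) = ⋆ otherwise, and let H = {c_v : v ∈ V}. Then every total concept class H̄ ⊆ {0,1}^{{1,…,n}} in which each c_v has an extension (i.e., for every v ∈ V there is c̄_v ∈ H̄ with c̄_v(i) = c_v(i) whenever c_v(i) ≠ ⋆) induces a proper vertex coloring of G via v ↦ c̄_v; hence |H̄| ≥ χ(G), the chromatic number of G. -/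
/-!
Adjacent vertices `u`, `v` lie on opposite sides of some biclique `(L i, R i)`, so `c_u` and `c_v`
take the two different values `0`, `1` at `i`, and extensions of them must differ there. Choosing an
extension in `Hbar` for every vertex thus colors `G` properly with the elements of `Hbar`.
-/

/-- with `G`, the bipartite partition `Bᵢ = (Lᵢ, Rᵢ)` of its edge set, and
the partial concepts `c_v` as in the Alon–Saks–Seymour construction, any total concept class
`H̄ ⊆ {0,1}^{[n]}` in which every `c_v` has an extension induces a proper coloring of `G`
via `v ↦ c̄_v`; hence `|H̄| ≥ χ(G)`. -/
theorem disambiguation_gives_coloring {V : Type*} [Fintype V] [DecidableEq V]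
    (G : SimpleGraph V)
    (n : ℕ) (L R : Fin n → Finset V)
    (hdisj : ∀ i, Disjoint (L i) (R i))
    (hsub : ∀ i, ∀ u ∈ L i, ∀ v ∈ R i, G.Adj u v)
    (hpart : ∀ u v, G.Adj u v →
      ∃! i : Fin n, (u ∈ L i ∧ v ∈ R i) ∨ (u ∈ R i ∧ v ∈ L i))
    (Hbar : Set (Fin n → Bool))
    (hext : ∀ v : V, ∃ g ∈ Hbar, ∀ (i : Fin n) (b : Bool),
      (if v ∈ L i then some false else if v ∈ R i then some true else none : Option Bool)
        = some b → g i = b) :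
    (∀ ext : V → Fin n → Bool,
      (∀ v : V, ext v ∈ Hbar ∧ ∀ (i : Fin n) (b : Bool),
        (if v ∈ L i then some false else if v ∈ R i then some true else none : Option Bool)
          = some b → ext v i = b) →
      ∀ u v, G.Adj u v → ext u ≠ ext v) ∧
    G.chromaticNumber ≤ Hbar.encard := by
  have hproper : ∀ ext : V → Fin n → Bool,
      (∀ v : V, ext v ∈ Hbar ∧ ∀ (i : Fin n) (b : Bool),
        (if v ∈ L i then some false else if v ∈ R i then some true else none : Option Bool)
          = some b → ext v i = b) →
      ∀ u v, G.Adj u v → ext u ≠ ext v := by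
    intro ext h u v huv heq
    have hL : ∀ w i, w ∈ L i → ext w i = false := fun w i hw =>
      (h w).2 i false (by simp [hw])
    have hR : ∀ w i, w ∈ R i → ext w i = true := fun w i hw =>
      -- `c_w` tests membership in `L i` first, so disjointness of the sides is needed here.
      (h w).2 i true (by simp [hw, Finset.disjoint_right.mp (hdisj i) hw])
    obtain ⟨i, hi, -⟩ := hpart u v huv
    have hval := congrFun heq i
    rcases hi with ⟨hu, hv⟩ | ⟨hu, hv⟩
    · simp [hL u i hu, hR v i hv] at hval
    · simp [hR u i hu, hL v i hv] at hval
  refine ⟨hproper, ?_⟩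
  choose ext hext using hext
  let C : G.Coloring Hbar := SimpleGraph.Coloring.mk (fun v => ⟨ext v, (hext v).1⟩)
    fun {u v} huv heq => hproper ext hext u v huv (congrArg Subtype.val heq)
  have := Fintype.ofFinite Hbar
  calc G.chromaticNumber ≤ (Fintype.card Hbar : ℕ∞) := C.colorable.chromaticNumber_le
    _ = Hbar.encard := by rw [Set.encard, ENat.card_eq_coe_fintype_card]
end

section
/- There exists a partial concept class H ⊆ {0,1,⋆}^ℕ with VC(H) = 1 and TD(H) ≤ 2 such that every total concept class H̄ ⊆ {0,1}^ℕ that disambiguates H (i.e., every finite sequence in (ℕ × {0,1})* realizable with respect to H is realizable with respect to H̄) satisfies VC(H̄) = ∞ (and hence also LD(H̄) = ∞). -/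
/-- Embedding of a total concept class into partial concepts. -/
def asPartial {X : Type*} (Hbar : Set (X → Bool)) : Set (X → Option Bool) :=
  (fun g x => some (g x)) '' Hbar

/-! ### The Ramsey theorem -/

/-- The Ramsey theorem for increasing `n`-tuples of naturals: every finite colouring is constant on
the increasing tuples drawn from some infinite set `{f 0 < f 1 < …}`. -/
theorem ramsey_seq {κ : Type*} [Finite κ] (n : ℕ) (c : (Fin n → ℕ) → κ) :
    ∃ f : ℕ → ℕ, StrictMono f ∧ ∃ col : κ, ∀ e : ℕ → ℕ, StrictMono e →
      c (fun i => f (e i)) = col := by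
  induction n with
  | zero =>
    exact ⟨id, strictMono_id, c Fin.elim0, fun e _ => congrArg c (Subsingleton.elim _ _)⟩
  | succ n ih =>
    -- End-homogenization: given an infinite set `F`, the tuples starting at `F 0` get a common
    -- colour after thinning out the rest of `F`.
    have step : ∀ F : {F : ℕ → ℕ // StrictMono F}, ∃ F' : {F : ℕ → ℕ // StrictMono F},
        (∀ i, ∃ k, 0 < k ∧ F'.1 i = F.1 k) ∧ ∃ col : κ, ∀ e : ℕ → ℕ, StrictMono e →
          c (Fin.cons (F.1 0) (fun i => F'.1 (e i))) = col := by
      rintro ⟨F, hF⟩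
      obtain ⟨g, hg, col, hcol⟩ := ih (fun b => c (Fin.cons (F 0) (fun i => F (b i + 1))))
      refine ⟨⟨fun i => F (g i + 1), fun i j hij => hF (by have := hg hij; omega)⟩,
        fun i => ⟨g i + 1, by omega, rfl⟩, col, fun e he => hcol e he⟩
    choose nx hsub col hcol using step
    let S : ℕ → {F : ℕ → ℕ // StrictMono F} := fun m => nx^[m] ⟨id, strictMono_id⟩
    have hS : ∀ m, S (m + 1) = nx (S m) := fun m => Function.iterate_succ_apply' nx m _
    let x : ℕ → ℕ := fun m => (S m).1 0
    have hx : StrictMono x := by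
      refine strictMono_nat_of_lt_succ fun m => ?_
      obtain ⟨k, hk, hk'⟩ := hsub (S m) 0
      change (S m).1 0 < (S (m + 1)).1 0
      rw [hS, hk']
      exact (S m).2 hk
    have hran : ∀ m r i, ∃ k, (S (m + r)).1 i = (S m).1 k := by
      intro m r
      induction r with
      | zero => exact fun i => ⟨i, rfl⟩
      | succ r ihr =>
        intro i
        obtain ⟨k, -, hk⟩ := hsub (S (m + r)) i
        obtain ⟨k', hk'⟩ := ihr k
        exact ⟨k', by rw [← add_assoc, hS, hk, hk']⟩
    have hend : ∀ m, ∀ e : ℕ → ℕ, StrictMono e → m < e 0 →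
        c (Fin.cons (x m) (fun i : Fin n => x (e i))) = col (S m) := by
      intro m e he hm
      have : ∀ i, ∃ k, x (e i) = (S (m + 1)).1 k := fun i => by
        have h0 : e 0 ≤ e i := he.monotone (Nat.zero_le i)
        obtain ⟨k, hk⟩ := hran (m + 1) (e i - (m + 1)) 0
        exact ⟨k, by rw [← hk]; congr 3; omega⟩
      choose t ht using this
      have htm : StrictMono t := fun i j hij => by
        have := hx (he hij)
        rw [ht, ht] at this
        exact (S (m + 1)).2.lt_iff_lt.1 this
      have := hcol (S m) t htm
      rw [← hS] at this
      simpa only [ht] using this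
    -- The colour of a tuple from `x` depends only on its first entry; some colour repeats
    -- infinitely often.
    obtain ⟨y, hy⟩ := Finite.exists_infinite_fiber (fun m => col (S m))
    rw [Set.infinite_coe_iff] at hy
    let g : ℕ → ℕ := Nat.nth (fun m => m ∈ (fun m => col (S m)) ⁻¹' {y})
    have hg : StrictMono g := Nat.nth_strictMono hy
    have hgy : ∀ i, col (S (g i)) = y := fun i => Nat.nth_mem_of_infinite hy i
    refine ⟨fun i => x (g i), hx.comp hg, y, fun e he => ?_⟩
    have := hend (g (e 0)) (fun i => g (e (i + 1)))
      (fun i j hij => hg (he (by omega))) (hg (he (by omega)))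
    rw [hgy] at this
    rw [← this]
    congr 1
    funext i
    refine Fin.cases rfl (fun j => rfl) i

/-! ### The class -/

/-- Two finite sets of intervals are adjacent if an interval of one has both endpoints strictly
inside an interval of the other. A pair `(l, r)` stands for the interval with these endpoints;
`l < r` is not required. -/
def Nest (s t : Finset (ℕ × ℕ)) : Prop :=
  ∃ P ∈ s, ∃ Q ∈ t, (P.1 < Q.1 ∧ Q.2 < P.2) ∨ (Q.1 < P.1 ∧ P.2 < Q.2)

/-- The numbering of the finite sets of intervals by which they become points of `ℕ`. -/
noncomputable def code : Finset (ℕ × ℕ) ≃ ℕ := Denumerable.eqv _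

/-- The class of all partial concepts whose `1`-set is a clique and whose `0`-set is an independent
set of the graph `Nest`. Supports may be infinite. -/
def csClass : Set (ℕ → Option Bool) :=
  {h | ∀ m n : ℕ, m ≠ n →
    (h m = some true → h n = some true →
      Nest (code.symm m) (code.symm n)) ∧
    (h m = some false → h n = some false →
      ¬ Nest (code.symm m) (code.symm n))}

/-- Two distinct points miss the pattern `00` if they are adjacent and `11` if they are not. -/
theorem vc_csClass : VCDimEq csClass 1 := by
  constructor
  · refine ⟨{0}, fun f => ⟨fun m => if m = 0 then some (f 0) else none, ?_, ?_⟩, by simp⟩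
    · intro m n hmn
      by_cases hm : m = 0 <;> by_cases hn : n = 0 <;> simp_all
    · simp
  · intro U hU
    by_contra! hc
    obtain ⟨m, hm, n, hn, hmn⟩ := Finset.one_lt_card.1 hc
    obtain ⟨h, hh, h1⟩ := hU (fun _ => true)
    obtain ⟨h', hh', h2⟩ := hU (fun _ => false)
    exact (hh' m n hmn).2 (h2 m hm) (h2 n hn) ((hh m n hmn).1 (h1 m hm) (h1 n hn))

/-- Thresholds of length `3` realize both `11` and `00` on their first two points. -/
theorem td_csClass : ¬ ThresholdGe csClass 3 := by
  rintro ⟨x, h, hh, hx⟩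
  have hne : x 0 ≠ x 1 := fun he => by
    have h0 := hx 1 0
    have h1 := hx 1 1
    rw [he, h1] at h0
    simp at h0
  exact (hh 2 (x 0) (x 1) hne).2 (by rw [hx]; rfl) (by rw [hx]; rfl)
    ((hh 0 (x 0) (x 1) hne).1 (by rw [hx]; rfl) (by rw [hx]; rfl))

/-! ### The cliques and independent sets -/

/-- The set of intervals `[u j, w j]` for `j ∈ A`. -/
def pat (A : Finset ℕ) (u w : ℕ → ℕ) : Finset (ℕ × ℕ) := A.image fun j => (u j, w j)

/-- The image of a set of intervals under the map `a` of endpoints. -/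
def mv (a : ℕ → ℕ) (B : Finset (ℕ × ℕ)) : Finset (ℕ × ℕ) := B.image (Prod.map a a)

theorem mv_pat (a : ℕ → ℕ) (A : Finset ℕ) (u w : ℕ → ℕ) :
    mv a (pat A u w) = pat A (fun j => a (u j)) (fun j => a (w j)) := by
  simp only [mv, pat, Finset.image_image]; rfl

theorem mv_mv (a b : ℕ → ℕ) (B : Finset (ℕ × ℕ)) : mv a (mv b B) = mv (fun i => a (b i)) B := by
  simp only [mv, Finset.image_image]; rfl

theorem mv_congr {a b : ℕ → ℕ} {B : Finset (ℕ × ℕ)}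
    (h : ∀ P ∈ B, a P.1 = b P.1 ∧ a P.2 = b P.2) : mv a B = mv b B :=
  Finset.image_congr fun P hP => Prod.ext (h P hP).1 (h P hP).2

theorem pat_congr {A : Finset ℕ} {u w u' w' : ℕ → ℕ}
    (h : ∀ j ∈ A, u j = u' j ∧ w j = w' j) : pat A u w = pat A u' w' :=
  Finset.image_congr fun j hj => Prod.ext (h j hj).1 (h j hj).2

/-- The left endpoint, in the block `[4Nj, 4N(j+1))`, of the interval with index `k < N`. -/
def leftPt (N k j : ℕ) : ℕ := 4 * (N * j) + k
/-- The right endpoint, in the block `j`, that makes the intervals of different indices nested: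
it decreases as `k` grows. Truncated subtraction is harmless since `k < N`. -/
def nestPt (N k j : ℕ) : ℕ := 4 * (N * j) + 2 * N - k
/-- The right endpoint, in the block `j`, that makes no two intervals nested: it increases with
`k`. It exceeds every `nestPt` of the block. -/
def crossPt (N k j : ℕ) : ℕ := 4 * (N * j) + 2 * N + 1 + k

theorem block_sep (N : ℕ) {i j : ℕ} (h : i < j) : N * i + N ≤ N * j := by
  calc N * i + N = N * (i + 1) := by ring
    _ ≤ N * j := Nat.mul_le_mul_left _ h

/-- The index `k < N` is used only if `A k` consists of more than half of the `D` blocks, so that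
any two such sets share a block. -/
structure Valid (N D : ℕ) (A : ℕ → Finset ℕ) (k : ℕ) : Prop where
  lt : k < N
  sub : A k ⊆ Finset.range D
  card : D < 2 * (A k).card

theorem Valid.common {N D : ℕ} {A : ℕ → Finset ℕ} {k l : ℕ} (hk : Valid N D A k)
    (hl : Valid N D A l) : ∃ j, j ∈ A k ∧ j ∈ A l := by
  by_contra! h
  have hd : Disjoint (A k) (A l) := Finset.disjoint_left.2 h
  have h1 := Finset.card_le_card (Finset.union_subset hk.sub hl.sub)
  rw [Finset.card_union_of_disjoint hd, Finset.card_range] at h1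
  have := hk.card
  have := hl.card
  omega

/-- For increasing `a`, the nested patterns placed along `a` form a clique and the crossing ones an
independent set. Labelling them `1` and `0` is thus realizable by `csClass`, and a disambiguation
contains a total concept with these labels. -/
theorem exists_realizing {Hbar : Set (ℕ → Bool)}
    (hH : ∀ S : List (ℕ × Bool), RealizableSeq csClass S → RealizableSeq (asPartial Hbar) S)
    (N D : ℕ) (A : ℕ → Finset ℕ) (a : ℕ → ℕ)
    (ha : ∀ p q, p < q → q < 4 * (N * D) → a p < a q) :
    ∃ g ∈ Hbar, ∀ k, Valid N D A k →
      g (code (mv a (pat (A k) (leftPt N k) (nestPt N k)))) = true ∧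
      g (code (mv a (pat (A k) (leftPt N k) (crossPt N k)))) = false := by
  classical
  have nestN : ∀ k l, Valid N D A k → Valid N D A l → k < l →
      (Nest (mv a (pat (A k) (leftPt N k) (nestPt N k))) (mv a (pat (A l) (leftPt N l) (nestPt N l))) ∧
       Nest (mv a (pat (A l) (leftPt N l) (nestPt N l)))
         (mv a (pat (A k) (leftPt N k) (nestPt N k)))) := by
    intro k l hk hl hkl
    obtain ⟨j, hj, hj'⟩ := hk.common hl
    have h1 := block_sep N (Finset.mem_range.1 (hk.sub hj))
    have h2 := hl.lt
    have hu : a (leftPt N k j) < a (leftPt N l j) := ha _ _ (by simp only [leftPt]; omega)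
      (by simp only [leftPt]; omega)
    have hw : a (nestPt N l j) < a (nestPt N k j) := ha _ _ (by simp only [nestPt]; omega)
      (by simp only [nestPt]; omega)
    rw [mv_pat, mv_pat]
    exact ⟨⟨_, Finset.mem_image_of_mem _ hj, _, Finset.mem_image_of_mem _ hj', Or.inl ⟨hu, hw⟩⟩,
      ⟨_, Finset.mem_image_of_mem _ hj', _, Finset.mem_image_of_mem _ hj, Or.inr ⟨hu, hw⟩⟩⟩
  have cross : ∀ k l i j, Valid N D A k → Valid N D A l → i ∈ A k → j ∈ A l →
      ¬ (a (leftPt N k i) < a (leftPt N l j) ∧ a (crossPt N l j) < a (crossPt N k i)) := by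
    rintro k l i j hk hl hi hj ⟨h1, h2⟩
    have hbi := block_sep N (Finset.mem_range.1 (hk.sub hi))
    have hbj := block_sep N (Finset.mem_range.1 (hl.sub hj))
    have hkN := hk.lt
    have hlN := hl.lt
    have mono : ∀ p q, p ≤ q → q < 4 * (N * D) → a p ≤ a q := fun p q hpq hq => by
      rcases hpq.eq_or_lt with rfl | h
      · exact le_rfl
      · exact (ha _ _ h hq).le
    have hlt1 : leftPt N k i < leftPt N l j := by
      by_contra! hc
      exact absurd (mono _ _ hc (by simp only [leftPt]; omega)) (by omega)
    have hlt2 : crossPt N l j < crossPt N k i := by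
      by_contra! hc
      exact absurd (mono _ _ hc (by simp only [crossPt]; omega)) (by omega)
    simp only [leftPt, crossPt] at hlt1 hlt2
    rcases lt_trichotomy i j with h | rfl | h
    · have := block_sep N h; omega
    · omega
    · have := block_sep N h; omega
  have nestC : ∀ k l, Valid N D A k → Valid N D A l →
      ¬ Nest (mv a (pat (A k) (leftPt N k) (crossPt N k)))
        (mv a (pat (A l) (leftPt N l) (crossPt N l))) := by
    rintro k l hk hl ⟨P, hP, Q, hQ, h⟩
    rw [mv_pat] at hP hQ
    obtain ⟨i, hi, rfl⟩ := Finset.mem_image.1 hP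
    obtain ⟨j, hj, rfl⟩ := Finset.mem_image.1 hQ
    rcases h with h | h
    · exact cross k l i j hk hl hi hj h
    · exact cross l k j i hl hk hj hi h
  have hdisj : ∀ k l, Valid N D A k → Valid N D A l →
      mv a (pat (A k) (leftPt N k) (nestPt N k)) ≠ mv a (pat (A l) (leftPt N l) (crossPt N l)) := by
    intro k l hk hl he
    obtain ⟨j, hj, -⟩ := hk.common hk
    have hmem : (a (leftPt N k j), a (nestPt N k j)) ∈ mv a (pat (A l) (leftPt N l) (crossPt N l)) := by
      rw [← he, mv_pat]; exact Finset.mem_image_of_mem _ hj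
    rw [mv_pat] at hmem
    obtain ⟨i, hi, hij⟩ := Finset.mem_image.1 hmem
    have hbi := block_sep N (Finset.mem_range.1 (hl.sub hi))
    have hbj := block_sep N (Finset.mem_range.1 (hk.sub hj))
    have hkN := hk.lt
    have hlN := hl.lt
    have inj : ∀ p q, p < 4 * (N * D) → q < 4 * (N * D) → a p = a q → p = q := by
      intro p q hp hq hpq
      rcases lt_trichotomy p q with h | h | h
      · have := ha _ _ h hq; omega
      · exact h
      · have := ha _ _ h hp; omega
    have e1 := inj _ _ (by simp only [leftPt]; omega) (by simp only [leftPt]; omega)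
      (Prod.ext_iff.1 hij).1
    have e2 := inj _ _ (by simp only [crossPt]; omega) (by simp only [nestPt]; omega)
      (Prod.ext_iff.1 hij).2
    simp only [leftPt, nestPt, crossPt] at e1 e2
    rcases lt_trichotomy i j with h | rfl | h
    · have := block_sep N h; omega
    · omega
    · have := block_sep N h; omega
  let X : ℕ → ℕ := fun k => code (mv a (pat (A k) (leftPt N k) (nestPt N k)))
  let Y : ℕ → ℕ := fun k => code (mv a (pat (A k) (leftPt N k) (crossPt N k)))
  have hXY : ∀ k l, Valid N D A k → Valid N D A l → X k ≠ Y l := fun k l hk hl he =>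
    hdisj k l hk hl (code.injective he)
  let V := (Finset.range N).filter (Valid N D A)
  have hV : ∀ k, k ∈ V ↔ Valid N D A k := fun k => by
    simp only [V, Finset.mem_filter, Finset.mem_range, and_iff_right_iff_imp]
    exact Valid.lt
  -- The realizing partial concept is supported exactly on the sampled points.
  obtain ⟨h', ⟨g, hg, rfl⟩, hS⟩ := hH
    (V.toList.map (fun k => (X k, true)) ++ V.toList.map (fun k => (Y k, false))) (by
      refine ⟨fun m => if ∃ k ∈ V, X k = m then some true
        else if ∃ k ∈ V, Y k = m then some false else none, ?_, ?_⟩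
      · intro m n hmn
        constructor
        · intro h1 h2
          dsimp only at h1 h2
          have hm : ∃ k ∈ V, X k = m := by
            by_contra hc; rw [if_neg hc] at h1; revert h1; split_ifs <;> simp
          have hn : ∃ k ∈ V, X k = n := by
            by_contra hc; rw [if_neg hc] at h2; revert h2; split_ifs <;> simp
          obtain ⟨k, hk, rfl⟩ := hm
          obtain ⟨l, hl, rfl⟩ := hn
          simp only [X, Equiv.symm_apply_apply]
          rcases lt_trichotomy k l with h | h | h
          · exact (nestN k l ((hV k).1 hk) ((hV l).1 hl) h).1
          · exact absurd (by rw [h]) hmn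
          · exact (nestN l k ((hV l).1 hl) ((hV k).1 hk) h).2
        · intro h1 h2
          dsimp only at h1 h2
          have hm : ∃ k ∈ V, Y k = m := by
            by_contra hc; rw [if_neg hc] at h1; revert h1; split_ifs <;> simp
          have hn : ∃ k ∈ V, Y k = n := by
            by_contra hc; rw [if_neg hc] at h2; revert h2; split_ifs <;> simp
          obtain ⟨k, hk, rfl⟩ := hm
          obtain ⟨l, hl, rfl⟩ := hn
          simp only [Y, Equiv.symm_apply_apply]
          exact nestC k l ((hV k).1 hk) ((hV l).1 hl)
      · intro p hp
        simp only [List.mem_append, List.mem_map, Finset.mem_toList] at hp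
        rcases hp with ⟨k, hk, rfl⟩ | ⟨k, hk, rfl⟩
        · exact if_pos ⟨k, hk, rfl⟩
        · have : ¬ ∃ l ∈ V, X l = Y k := fun ⟨l, hl, he⟩ =>
            hXY l k ((hV l).1 hl) ((hV k).1 hk) he
          simp only [if_neg this]
          exact if_pos ⟨k, hk, rfl⟩)
  refine ⟨g, hg, fun k hk => ⟨?_, ?_⟩⟩
  · have := hS (X k, true) (List.mem_append_left _ (List.mem_map.2
      ⟨k, Finset.mem_toList.2 ((hV k).2 hk), rfl⟩))
    simpa using this
  · have := hS (Y k, false) (List.mem_append_right _ (List.mem_map.2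
      ⟨k, Finset.mem_toList.2 ((hV k).2 hk), rfl⟩))
    simpa using this

/-! ### Homogenization -/

/-- The Ramsey step. `C a` is a concept of `Hbar` chosen for the parameter points `a 0 < a 1 < …`,
and `v B` is the point of `ℕ` that represents the pattern `B` inside the homogeneous set. Taking the
parameters to be the even-indexed entries of an increasing sequence `e` leaves one free position
(an odd index) in each gap; the value of the concept at a pattern with endpoints on `e` then depends
only on the indices of these endpoints, through `ψ`. -/
theorem exists_homogeneous {Hbar : Set (ℕ → Bool)}
    (hH : ∀ S : List (ℕ × Bool), RealizableSeq csClass S → RealizableSeq (asPartial Hbar) S)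
    (N D : ℕ) (A : ℕ → Finset ℕ) :
    ∃ (C : (ℕ → ℕ) → ℕ → Bool) (v : Finset (ℕ × ℕ) → ℕ) (ψ : Finset (ℕ × ℕ) → Bool),
      (∀ a : ℕ → ℕ, StrictMono a → C a ∈ Hbar) ∧
      (∀ e : ℕ → ℕ, StrictMono e → ∀ B : Finset (ℕ × ℕ),
        (∀ P ∈ B, P.1 < 8 * (N * D) ∧ P.2 < 8 * (N * D)) →
        C (fun p => e (2 * p)) (v (mv e B)) = ψ B) ∧
      (∀ k, Valid N D A k →
        ψ (mv (fun p => 2 * p) (pat (A k) (leftPt N k) (nestPt N k))) = true ∧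
        ψ (mv (fun p => 2 * p) (pat (A k) (leftPt N k) (crossPt N k))) = false) := by
  classical
  let M := 4 * (N * D)
  let n := 8 * (N * D)
  let ext : {m : ℕ} → (Fin m → ℕ) → ℕ → ℕ := fun {m} b i => if h : i < m then b ⟨i, h⟩ else 0
  have hG : ∀ b : Fin M → ℕ, ∃ g : ℕ → Bool, StrictMono b → g ∈ Hbar ∧ ∀ k, Valid N D A k →
      g (code (mv (ext b) (pat (A k) (leftPt N k) (nestPt N k)))) = true ∧
      g (code (mv (ext b) (pat (A k) (leftPt N k) (crossPt N k)))) = false := by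
    intro b
    by_cases hb : StrictMono b
    · obtain ⟨g, hg⟩ := exists_realizing hH N D A (ext b) (fun p q hpq hq => by
        simp only [ext, dif_pos (show q < M from hq), dif_pos (show p < M from hpq.trans hq)]
        exact hb hpq)
      exact ⟨g, fun _ => hg⟩
    · exact ⟨fun _ => true, fun h => absurd h hb⟩
  choose G hG using hG
  let R := (Finset.range n ×ˢ Finset.range n).powerset
  -- The colour of an `n`-tuple is the table of values at all patterns on its entries of the
  -- concept whose parameters are the entries of even index.
  obtain ⟨f, hf, col, hcol⟩ := ramsey_seq (κ := R → Bool) n (fun b B =>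
    G (fun p : Fin M => ext b (2 * p)) (code (mv (ext b) B.1)))
  have key : ∀ e : ℕ → ℕ, StrictMono e → ∀ B (hB : B ∈ R),
      G (fun p : Fin M => f (e (2 * p))) (code (mv f (mv e B))) = col ⟨B, hB⟩ := by
    intro e he B hB
    rw [← hcol e he]
    have h1 : (fun p : Fin M => f (e (2 * p))) =
        fun p : Fin M => ext (fun i : Fin n => f (e i)) (2 * p) := by
      funext p
      have : 2 * (p : ℕ) < n := by have := p.2; simp only [M, n] at *; omega
      simp only [ext, dif_pos this]
    have h2 : mv f (mv e B) = mv (ext (fun i : Fin n => f (e i))) B := by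
      rw [mv_mv]
      refine mv_congr fun P hP => ?_
      have := Finset.mem_product.1 (Finset.mem_powerset.1 hB hP)
      simp only [ext, dif_pos (Finset.mem_range.1 this.1), dif_pos (Finset.mem_range.1 this.2),
        and_self]
    rw [h1, h2]
  let ψ : Finset (ℕ × ℕ) → Bool := fun B => if hB : B ∈ R then col ⟨B, hB⟩ else true
  have key' : ∀ e : ℕ → ℕ, StrictMono e → ∀ B : Finset (ℕ × ℕ),
        (∀ P ∈ B, P.1 < 8 * (N * D) ∧ P.2 < 8 * (N * D)) →
        G (fun p : Fin M => f (e (2 * p))) (code (mv f (mv e B))) = ψ B := by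
    intro e he B hB
    have hBR : B ∈ R := Finset.mem_powerset.2 fun P hP =>
      Finset.mem_product.2 ⟨Finset.mem_range.2 (hB P hP).1, Finset.mem_range.2 (hB P hP).2⟩
    simp only [ψ, dif_pos hBR]
    exact key e he B hBR
  refine ⟨fun a => G (fun p : Fin M => f (a p)), fun B => code (mv f B), ψ,
    fun a ha => (hG _ (fun p q hpq => hf (ha hpq))).1, key', fun k hk => ?_⟩
  have hkN := hk.lt
  have hk' := (hG (fun p : Fin M => f (2 * p)) (fun p q hpq => hf (by
    have : (p : ℕ) < q := hpq
    omega))).2 k hk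
  have hbound : ∀ w : ℕ → ℕ, (∀ j ∈ A k, w j < M) →
      (∀ P ∈ mv (fun p => 2 * p) (pat (A k) (leftPt N k) w),
        P.1 < 8 * (N * D) ∧ P.2 < 8 * (N * D)) ∧
      mv (ext fun p : Fin M => f (2 * p)) (pat (A k) (leftPt N k) w) =
        mv f (mv id (mv (fun p => 2 * p) (pat (A k) (leftPt N k) w))) := by
    intro w hw
    have hl : ∀ j ∈ A k, leftPt N k j < M := fun j hj => by
      have := block_sep N (Finset.mem_range.1 (hk.sub hj))
      simp only [leftPt, M]; omega
    constructor
    · intro P hP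
      rw [mv_pat] at hP
      obtain ⟨j, hj, rfl⟩ := Finset.mem_image.1 hP
      have h1 := hw j hj
      have h2 := hl j hj
      simp only [M] at h1 h2
      constructor <;> dsimp only <;> omega
    · rw [mv_mv, mv_mv, mv_pat, mv_pat]
      refine pat_congr fun j hj => ?_
      simp only [ext, dif_pos (hl j hj), dif_pos (hw j hj), id, and_self]
  have b1 := hbound (nestPt N k) (fun j hj => by
      have := block_sep N (Finset.mem_range.1 (hk.sub hj))
      simp only [nestPt, M]; omega)
  have b2 := hbound (crossPt N k) (fun j hj => by
      have := block_sep N (Finset.mem_range.1 (hk.sub hj))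
      simp only [crossPt, M]; omega)
  rw [b1.2, b2.2] at hk'
  exact ⟨(key' id strictMono_id _ b1.1).symm.trans hk'.1,
    (key' id strictMono_id _ b2.1).symm.trans hk'.2⟩

/-! ### Flips and shattering -/

/-- Parameter points indexed by a bit vector: the `p`-th one is `4p` or `4p + 2`. -/
def gridPt (ε : ℕ → Bool) (p : ℕ) : ℕ := 4 * p + if ε p then 2 else 0

theorem gridPt_strictMono (ε : ℕ → Bool) : StrictMono (gridPt ε) := by
  refine strictMono_nat_of_lt_succ fun p => ?_
  simp only [gridPt]
  split_ifs <;> omega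

/-- The parameter set `Q` is flippable if some fixed pattern has its value determined, and toggled,
by a common switch of all the parameters in `Q`, whatever the parameters outside `Q` are. -/
def Flippable (C : (ℕ → ℕ) → ℕ → Bool) (v : Finset (ℕ × ℕ) → ℕ) (Q : Finset ℕ) : Prop :=
  ∃ (B : Finset (ℕ × ℕ)) (β : Bool), ∀ (ε : ℕ → Bool) (c : Bool), (∀ q ∈ Q, ε q = c) →
    C (gridPt ε) (v B) = (β ^^ c)

/-- Disjoint flippable sets can be switched independently, so their witnessing points are
shattered. -/
theorem exists_shattered {Hbar : Set (ℕ → Bool)} {C : (ℕ → ℕ) → ℕ → Bool}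
    {v : Finset (ℕ × ℕ) → ℕ} (hC : ∀ a : ℕ → ℕ, StrictMono a → C a ∈ Hbar)
    (T : Finset ℕ) (Q : ℕ → Finset ℕ) (hQ : ∀ l ∈ T, Flippable C v (Q l))
    (hdisj : ∀ k ∈ T, ∀ l ∈ T, k ≠ l → Disjoint (Q k) (Q l)) :
    ∃ U : Finset ℕ, Shatters (asPartial Hbar) U ∧ U.card = T.card := by
  classical
  have hQ' : ∀ l, ∃ (m : ℕ) (β : Bool), l ∈ T → ∀ (ε : ℕ → Bool) (c : Bool),
      (∀ q ∈ Q l, ε q = c) → C (gridPt ε) m = (β ^^ c) := by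
    intro l
    by_cases hl : l ∈ T
    · obtain ⟨B, β, h⟩ := hQ l hl
      exact ⟨v B, β, fun _ => h⟩
    · exact ⟨0, true, fun h => absurd h hl⟩
  choose m β hm using hQ'
  have pattern : ∀ F : ℕ → Bool, ∃ g ∈ Hbar, ∀ l ∈ T, g (m l) = F l := by
    intro F
    let ε : ℕ → Bool := fun q => decide (∃ l ∈ T, q ∈ Q l ∧ (β l ^^ F l) = true)
    refine ⟨C (gridPt ε), hC _ (gridPt_strictMono ε), fun l hl => ?_⟩
    rw [hm l hl ε (β l ^^ F l)]
    · cases β l <;> cases F l <;> rfl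
    · intro q hq
      rw [Bool.eq_iff_iff, decide_eq_true_iff]
      constructor
      · rintro ⟨k, hk, hqk, h⟩
        by_cases hkl : k = l
        · rwa [hkl] at h
        · exact absurd hq (Finset.disjoint_left.1 (hdisj k hk l hl hkl) hqk)
      · exact fun h => ⟨l, hl, hq, h⟩
  refine ⟨T.image m, ?_, Finset.card_image_of_injOn fun k hk l hl hkl => ?_⟩
  · intro F
    obtain ⟨g, hg, h⟩ := pattern (fun l => F (m l))
    refine ⟨_, ⟨g, hg, rfl⟩, fun x hx => ?_⟩
    obtain ⟨l, hl, rfl⟩ := Finset.mem_image.1 hx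
    exact congrArg some (h l hl)
  · by_contra hne
    obtain ⟨g, -, h⟩ := pattern (fun i => decide (i = k))
    have h1 := h k hk
    have h2 := h l hl
    rw [← hkl, h1] at h2
    simp [Ne.symm hne] at h2

theorem card_lt_of_flippable {Hbar : Set (ℕ → Bool)} {C : (ℕ → ℕ) → ℕ → Bool}
    {v : Finset (ℕ × ℕ) → ℕ} (hC : ∀ a : ℕ → ℕ, StrictMono a → C a ∈ Hbar) {d : ℕ}
    (hd : ¬ ∃ U : Finset ℕ, Shatters (asPartial Hbar) U ∧ U.card = d)
    (T : Finset ℕ) (Q : ℕ → Finset ℕ) (hQ : ∀ l ∈ T, Flippable C v (Q l))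
    (hdisj : ∀ k ∈ T, ∀ l ∈ T, k ≠ l → Disjoint (Q k) (Q l)) : T.card < d := by
  by_contra! hc
  obtain ⟨T', hT', rfl⟩ := Finset.exists_subset_card_eq hc
  exact hd (exists_shattered hC T' Q (fun l hl => hQ l (hT' hl))
    fun k hk l hl => hdisj k (hT' hk) l (hT' hl))

section

variable {N D : ℕ} {C : (ℕ → ℕ) → ℕ → Bool} {v : Finset (ℕ × ℕ) → ℕ} {ψ : Finset (ℕ × ℕ) → Bool}

/-- If moving all endpoints of a pattern from the parameter points into the gaps just after them
changes its value, then these parameter points are flippable. The witness has the endpoints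
`4p + 2`: these are the parameters themselves for the bit `1`, and lie just after the parameters
`4p` for the bit `0`. -/
theorem nudge_flippable
    (hψ : ∀ e : ℕ → ℕ, StrictMono e → ∀ B : Finset (ℕ × ℕ),
        (∀ P ∈ B, P.1 < 8 * (N * D) ∧ P.2 < 8 * (N * D)) →
        C (fun p => e (2 * p)) (v (mv e B)) = ψ B)
    (A : Finset ℕ) (u w : ℕ → ℕ)
    (hb : ∀ j ∈ A, u j < 4 * (N * D) ∧ w j < 4 * (N * D))
    (hne : ψ (mv (fun p => 2 * p) (pat A u w)) ≠ ψ (mv (fun p => 2 * p + 1) (pat A u w))) :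
    Flippable C v (A.image u ∪ A.image w) := by
  refine ⟨mv (fun p => 4 * p + 2) (pat A u w), ψ (mv (fun p => 2 * p + 1) (pat A u w)),
    fun ε c hc => ?_⟩
  have hcu : ∀ j ∈ A, ε (u j) = c := fun j hj =>
    hc _ (Finset.mem_union_left _ (Finset.mem_image_of_mem u hj))
  have hcw : ∀ j ∈ A, ε (w j) = c := fun j hj =>
    hc _ (Finset.mem_union_right _ (Finset.mem_image_of_mem w hj))
  let e : ℕ → ℕ := fun i => if i % 2 = 0 then gridPt ε (i / 2)
    else if ε (i / 2) then 4 * (i / 2) + 3 else 4 * (i / 2) + 2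
  have e0 : ∀ q, e (2 * q) = gridPt ε q := fun q => by
    simp only [e, show 2 * q % 2 = 0 by omega, show 2 * q / 2 = q by omega, if_true]
  have e1 : ∀ q, e (2 * q + 1) = if ε q then 4 * q + 3 else 4 * q + 2 := fun q => by
    simp only [e, show (2 * q + 1) % 2 = 1 by omega, show (2 * q + 1) / 2 = q by omega,
      one_ne_zero, if_false]
  have he : StrictMono e := by
    refine strictMono_nat_of_lt_succ fun i => ?_
    obtain ⟨q, rfl | rfl⟩ : ∃ q, i = 2 * q ∨ i = 2 * q + 1 := ⟨i / 2, by omega⟩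
    · rw [e0, e1, gridPt]; split_ifs <;> omega
    · rw [e1, show 2 * q + 1 + 1 = 2 * (q + 1) by ring, e0, gridPt]; split_ifs <;> omega
  have hg : gridPt ε = fun p => e (2 * p) := funext fun p => (e0 p).symm
  cases c with
  | true =>
    have hB : mv (fun p => 4 * p + 2) (pat A u w) = mv e (mv (fun p => 2 * p) (pat A u w)) := by
      rw [mv_mv, mv_pat, mv_pat]
      exact pat_congr fun j hj => by
        rw [e0, e0, gridPt, gridPt, hcu j hj, hcw j hj]; exact ⟨rfl, rfl⟩
    rw [hB, hg, hψ e he]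
    · revert hne
      cases ψ (mv (fun p => 2 * p) (pat A u w)) <;>
        cases ψ (mv (fun p => 2 * p + 1) (pat A u w)) <;> simp
    · intro P hP
      rw [mv_pat] at hP
      obtain ⟨j, hj, rfl⟩ := Finset.mem_image.1 hP
      have := hb j hj
      constructor <;> dsimp only <;> omega
  | false =>
    have hB : mv (fun p => 4 * p + 2) (pat A u w) =
        mv e (mv (fun p => 2 * p + 1) (pat A u w)) := by
      rw [mv_mv, mv_pat, mv_pat]
      exact pat_congr fun j hj => by
        rw [e1, e1, hcu j hj, hcw j hj]; exact ⟨rfl, rfl⟩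
    rw [hB, hg, hψ e he]
    · simp
    · intro P hP
      rw [mv_pat] at hP
      obtain ⟨j, hj, rfl⟩ := Finset.mem_image.1 hP
      have := hb j hj
      constructor <;> dsimp only <;> omega

/-- If, for a pattern with all endpoints in gaps, moving one right endpoint across the parameter
point `p + 1` changes the value, then that parameter point is flippable. The witness has this
endpoint at `4(p + 1) + 1`, between the two possible positions of the parameter. -/
theorem crossing_flippable
    (hψ : ∀ e : ℕ → ℕ, StrictMono e → ∀ B : Finset (ℕ × ℕ),
        (∀ P ∈ B, P.1 < 8 * (N * D) ∧ P.2 < 8 * (N * D)) →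
        C (fun p => e (2 * p)) (v (mv e B)) = ψ B)
    (A : Finset ℕ) (u w : ℕ → ℕ) (p i : ℕ) (hw : w i = p + 1)
    (hb : ∀ j ∈ A, u j < 4 * (N * D) ∧ w j < 4 * (N * D))
    (hu : ∀ j ∈ A, u j ≠ p ∧ u j ≠ p + 1) (hwp : ∀ j ∈ A, j ≠ i → w j ≠ p ∧ w j ≠ p + 1)
    (hne : ψ (mv (fun q => 2 * q + 1) (pat A u (Function.update w i p))) ≠
      ψ (mv (fun q => 2 * q + 1) (pat A u w))) :
    Flippable C v {p + 1} := by
  refine ⟨pat A (fun j => 4 * u j + 3) (fun j => if j = i then 4 * (p + 1) + 1 else 4 * w j + 3),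
    ψ (mv (fun q => 2 * q + 1) (pat A u w)), fun ε c hc => ?_⟩
  replace hc := hc (p + 1) (Finset.mem_singleton_self _)
  let e : ℕ → ℕ := fun i => if i % 2 = 0 then gridPt ε (i / 2)
    else if (i / 2 = p ∧ ε (p + 1) = true) ∨ (i / 2 = p + 1 ∧ ε (p + 1) = false)
      then 4 * (p + 1) + 1 else 4 * (i / 2) + 3
  have e0 : ∀ q, e (2 * q) = gridPt ε q := fun q => by
    simp only [e, show 2 * q % 2 = 0 by omega, show 2 * q / 2 = q by omega, if_true]
  have e1 : ∀ q, e (2 * q + 1) =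
      if (q = p ∧ ε (p + 1) = true) ∨ (q = p + 1 ∧ ε (p + 1) = false)
      then 4 * (p + 1) + 1 else 4 * q + 3 := fun q => by
    simp only [e, show (2 * q + 1) % 2 = 1 by omega, show (2 * q + 1) / 2 = q by omega,
      one_ne_zero, if_false]
  have he : StrictMono e := by
    refine strictMono_nat_of_lt_succ fun i => ?_
    obtain ⟨q, rfl | rfl⟩ : ∃ q, i = 2 * q ∨ i = 2 * q + 1 := ⟨i / 2, by omega⟩
    · rw [e0, e1, gridPt]
      by_cases h : q = p + 1
      · subst h; cases h : ε (p + 1) <;> simp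
      · split_ifs <;> omega
    · rw [e1, show 2 * q + 1 + 1 = 2 * (q + 1) by ring, e0, gridPt]
      by_cases h : q = p
      · subst h; cases h : ε (q + 1) <;> simp; omega
      · split_ifs <;> omega
  have e1' : ∀ q, q ≠ p → q ≠ p + 1 → e (2 * q + 1) = 4 * q + 3 := fun q h h' => by
    rw [e1, if_neg (by tauto)]
  have hg : gridPt ε = fun p => e (2 * p) := funext fun p => (e0 p).symm
  cases c with
  | true =>
    have hB : pat A (fun j => 4 * u j + 3)
          (fun j => if j = i then 4 * (p + 1) + 1 else 4 * w j + 3) =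
        mv e (mv (fun q => 2 * q + 1) (pat A u (Function.update w i p))) := by
      rw [mv_mv, mv_pat]
      refine pat_congr fun j hj => ⟨(e1' _ (hu j hj).1 (hu j hj).2).symm, ?_⟩
      by_cases h : j = i
      · subst h
        rw [if_pos rfl, Function.update_self, e1, if_pos (Or.inl ⟨rfl, hc⟩)]
      · rw [if_neg h, Function.update_of_ne h, e1' _ (hwp j hj h).1 (hwp j hj h).2]
    rw [hB, hg, hψ e he]
    · revert hne
      cases ψ (mv (fun q => 2 * q + 1) (pat A u (Function.update w i p))) <;>
        cases ψ (mv (fun q => 2 * q + 1) (pat A u w)) <;> simp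
    · intro P hP
      rw [mv_pat] at hP
      obtain ⟨j, hj, rfl⟩ := Finset.mem_image.1 hP
      have := hb j hj
      have hle : Function.update w i p j ≤ w j := by
        by_cases h : j = i
        · subst h; rw [Function.update_self]; omega
        · rw [Function.update_of_ne h]
      constructor <;> dsimp only <;> omega
  | false =>
    have hB : pat A (fun j => 4 * u j + 3)
          (fun j => if j = i then 4 * (p + 1) + 1 else 4 * w j + 3) =
        mv e (mv (fun q => 2 * q + 1) (pat A u w)) := by
      rw [mv_mv, mv_pat]
      refine pat_congr fun j hj => ⟨(e1' _ (hu j hj).1 (hu j hj).2).symm, ?_⟩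
      by_cases h : j = i
      · subst h
        rw [if_pos rfl, hw, e1, if_pos (Or.inr ⟨rfl, hc⟩)]
      · rw [if_neg h, e1' _ (hwp j hj h).1 (hwp j hj h).2]
    rw [hB, hg, hψ e he]
    · simp
    · intro P hP
      rw [mv_pat] at hP
      obtain ⟨j, hj, rfl⟩ := Finset.mem_image.1 hP
      have := hb j hj
      constructor <;> dsimp only <;> omega

/-- Sliding the right endpoints from `crossPt` down to `nestPt`, one gap at a time, never changes
the value if no parameter point in the blocks of `A` is flippable. The induction is on the total
distance `s` from `nestPt`. -/
theorem path_const
    (hψ : ∀ e : ℕ → ℕ, StrictMono e → ∀ B : Finset (ℕ × ℕ),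
        (∀ P ∈ B, P.1 < 8 * (N * D) ∧ P.2 < 8 * (N * D)) →
        C (fun p => e (2 * p)) (v (mv e B)) = ψ B)
    (A : Finset ℕ) (hA : A ⊆ Finset.range D) (k : ℕ) (hk : k < N)
    (hfree : ∀ p, p < 4 * (N * D) → p / (4 * N) ∈ A → ¬ Flippable C v {p}) (s : ℕ) :
    ∀ w : ℕ → ℕ, (∀ j ∈ A, nestPt N k j ≤ w j ∧ w j ≤ crossPt N k j) →
      ∑ j ∈ A, (w j - nestPt N k j) = s →
      ψ (mv (fun q => 2 * q + 1) (pat A (leftPt N k) w)) =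
        ψ (mv (fun q => 2 * q + 1) (pat A (leftPt N k) (nestPt N k))) := by
  induction s with
  | zero =>
    intro w hw hs
    rw [pat_congr (u' := leftPt N k) (w' := nestPt N k) (A := A)]
    intro j hj
    have h1 := Finset.sum_eq_zero_iff.1 hs j hj
    have h2 := hw j hj
    exact ⟨rfl, by omega⟩
  | succ s ih =>
    intro w hw hs
    obtain ⟨i, hi, hne⟩ := Finset.exists_ne_zero_of_sum_ne_zero
      (show ∑ j ∈ A, (w j - nestPt N k j) ≠ 0 by omega)
    obtain ⟨p, hp⟩ : ∃ p, w i = p + 1 := ⟨w i - 1, by omega⟩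
    have hwi := hw i hi
    have hsum : ∑ j ∈ A, (Function.update w i p j - nestPt N k j) = s := by
      rw [← Finset.add_sum_erase A _ hi] at hs ⊢
      rw [Function.update_self]
      rw [Finset.sum_congr rfl (g := fun j => w j - nestPt N k j)]
      · omega
      · intro j hj
        rw [Function.update_of_ne (Finset.ne_of_mem_erase hj)]
    rw [← ih (Function.update w i p) _ hsum]
    · by_contra hcon
      have hbi := block_sep N (Finset.mem_range.1 (hA hi))
      simp only [nestPt, crossPt] at hwi hne
      have hdiv : (p + 1) / (4 * N) = i := by
        rw [Nat.div_eq_iff (by omega)]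
        have : i * (4 * N) = 4 * (N * i) := by ring
        omega
      refine hfree (p + 1) (by omega) (by rwa [hdiv])
        (crossing_flippable hψ A (leftPt N k) w p i hp ?_ ?_ ?_ (Ne.symm hcon))
      · intro j hj
        have := hw j hj
        have hbj := block_sep N (Finset.mem_range.1 (hA hj))
        simp only [nestPt, crossPt, leftPt] at this ⊢
        omega
      · intro j hj
        have := hw j hj
        simp only [leftPt]
        rcases lt_trichotomy i j with h | rfl | h
        · have := block_sep N h; omega
        · omega
        · have := block_sep N h; omega
      · intro j hj hji
        have := hw j hj
        simp only [nestPt, crossPt] at this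
        rcases lt_or_gt_of_ne hji with h | h
        · have := block_sep N h; omega
        · have := block_sep N h; omega
    · intro j hj
      by_cases h : j = i
      · subst h; rw [Function.update_self]; omega
      · rw [Function.update_of_ne h]; exact hw j hj

end

/-! ### Conclusion -/

/-- Patterns of different indices have disjoint sets of endpoints. -/
theorem supports_disjoint {N : ℕ} {A A' : Finset ℕ} {k l : ℕ} (hk : k < N) (hl : l < N) (hkl : k ≠ l) :
    Disjoint (A.image (leftPt N k) ∪ A.image (nestPt N k))
      (A'.image (leftPt N l) ∪ A'.image (nestPt N l)) ∧
    Disjoint (A.image (leftPt N k) ∪ A.image (crossPt N k))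
      (A'.image (leftPt N l) ∪ A'.image (crossPt N l)) := by
  simp only [Finset.disjoint_left, Finset.mem_union, Finset.mem_image]
  constructor
  · rintro x (⟨i, -, rfl⟩ | ⟨i, -, rfl⟩) (⟨j, -, h⟩ | ⟨j, -, h⟩) <;>
    · simp only [leftPt, nestPt] at h
      rcases lt_trichotomy i j with h' | rfl | h'
      · have := block_sep N h'; omega
      · omega
      · have := block_sep N h'; omega
  · rintro x (⟨i, -, rfl⟩ | ⟨i, -, rfl⟩) (⟨j, -, h⟩ | ⟨j, -, h⟩) <;>
    · simp only [leftPt, crossPt] at h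
      rcases lt_trichotomy i j with h' | rfl | h'
      · have := block_sep N h'; omega
      · omega
      · have := block_sep N h'; omega

/-- Every disambiguation of `csClass` shatters a set of each finite size `d`. -/
theorem csClass_forces_shattering {Hbar : Set (ℕ → Bool)}
    (hH : ∀ S : List (ℕ × Bool), RealizableSeq csClass S → RealizableSeq (asPartial Hbar) S)
    (d : ℕ) : ∃ U : Finset ℕ, Shatters (asPartial Hbar) U ∧ U.card = d := by
  classical
  by_contra hd
  let D := 6 * d
  -- `N` is large enough for every set of blocks to be `A k` for some `k < N`.
  let A : ℕ → Finset ℕ := fun k => (Denumerable.eqv (Finset ℕ)).symm k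
  let N := (Finset.range D).powerset.sup (Denumerable.eqv (Finset ℕ)) + 1
  obtain ⟨C, v, ψ, hC, hψ, hval⟩ := exists_homogeneous hH N D A
  let V := (Finset.range N).filter (Valid N D A)
  have hV : ∀ k ∈ V, Valid N D A k := fun k hk => (Finset.mem_filter.1 hk).2
  have hVne : ∀ k, Valid N D A k → (A k).Nonempty := fun k hk =>
    Finset.card_pos.1 (by have := hk.card; omega)
  have hbd : ∀ k, Valid N D A k → ∀ j ∈ A k, leftPt N k j < 4 * (N * D) ∧
      nestPt N k j < 4 * (N * D) ∧ crossPt N k j < 4 * (N * D) := by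
    intro k hk j hj
    have := block_sep N (Finset.mem_range.1 (hk.sub hj))
    have := hk.lt
    simp only [leftPt, nestPt, crossPt]
    omega
  -- `T1`, `T0`: the indices whose pattern changes value when nudged into the gaps; `E`: the
  -- flippable parameter points.
  let T1 := V.filter fun k =>
    ψ (mv (fun q => 2 * q + 1) (pat (A k) (leftPt N k) (nestPt N k))) ≠ true
  let T0 := V.filter fun k =>
    ψ (mv (fun q => 2 * q + 1) (pat (A k) (leftPt N k) (crossPt N k))) ≠ false
  let E := (Finset.range (4 * (N * D))).filter fun p => Flippable C v {p}
  have h1 : T1.card < d := by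
    refine card_lt_of_flippable (v := v) hC hd T1
      (fun k => (A k).image (leftPt N k) ∪ (A k).image (nestPt N k)) ?_ ?_
    · intro k hk
      obtain ⟨hkV, hkb⟩ := Finset.mem_filter.1 hk
      have hv := hV k hkV
      refine nudge_flippable hψ (A k) _ _
        (fun j hj => ⟨(hbd k hv j hj).1, (hbd k hv j hj).2.1⟩) ?_
      rw [(hval k hv).1]
      exact Ne.symm hkb
    · intro k hk l hl hkl
      have hk' := hV k (Finset.mem_filter.1 hk).1
      have hl' := hV l (Finset.mem_filter.1 hl).1
      exact (supports_disjoint hk'.lt hl'.lt hkl).1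
  have h0 : T0.card < d := by
    refine card_lt_of_flippable (v := v) hC hd T0
      (fun k => (A k).image (leftPt N k) ∪ (A k).image (crossPt N k)) ?_ ?_
    · intro k hk
      obtain ⟨hkV, hkb⟩ := Finset.mem_filter.1 hk
      have hv := hV k hkV
      refine nudge_flippable hψ (A k) _ _
        (fun j hj => ⟨(hbd k hv j hj).1, (hbd k hv j hj).2.2⟩) ?_
      rw [(hval k hv).2]
      exact Ne.symm hkb
    · intro k hk l hl hkl
      have hk' := hV k (Finset.mem_filter.1 hk).1
      have hl' := hV l (Finset.mem_filter.1 hl).1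
      exact (supports_disjoint hk'.lt hl'.lt hkl).2
  have hE : E.card < d := by
    refine card_lt_of_flippable (v := v) hC hd E (fun p => {p}) (fun p hp => (Finset.mem_filter.1 hp).2) ?_
    intro p _ q _ hpq
    exact Finset.disjoint_singleton.2 hpq
  have hpick : ∀ k, ∃ j, Valid N D A k → j ∈ A k := fun k => by
    by_cases hk : Valid N D A k
    · obtain ⟨j, hj⟩ := hVne k hk
      exact ⟨j, fun _ => hj⟩
    · exact ⟨0, fun h => absurd h hk⟩
  choose pick hpick using hpick
  -- One block from each index in `T1` and `T0`, and every block with a point of `E`: fewer than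
  -- half of the `6 * d` blocks in total.
  let bad := (T1.image pick ∪ T0.image pick) ∪ E.image (fun p => p / (4 * N))
  have hbad : bad.card + 3 ≤ 3 * d := by
    have a1 := Finset.card_union_le (T1.image pick ∪ T0.image pick) (E.image (fun p => p / (4 * N)))
    have a2 := Finset.card_union_le (T1.image pick) (T0.image pick)
    have a3 := Finset.card_image_le (s := T1) (f := pick)
    have a4 := Finset.card_image_le (s := T0) (f := pick)
    have a5 := Finset.card_image_le (s := E) (f := fun p => p / (4 * N))
    simp only [bad]
    omega
  -- The index whose set of blocks is the complement of `bad`: it is valid, lies in neither `T1` nor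
  -- `T0`, and meets no block of `E`.
  let k := Denumerable.eqv (Finset ℕ) (Finset.range D \ bad)
  have hAk : A k = Finset.range D \ bad := Equiv.symm_apply_apply _ _
  have hkv : Valid N D A k := by
    refine ⟨Nat.lt_succ_of_le (Finset.le_sup (f := Denumerable.eqv (Finset ℕ))
      (Finset.mem_powerset.2 Finset.sdiff_subset)), hAk ▸ Finset.sdiff_subset, ?_⟩
    have := Finset.le_card_sdiff bad (Finset.range D)
    rw [Finset.card_range] at this
    rw [hAk]
    simp only [D] at this ⊢
    omega
  have hnb : ∀ j ∈ A k, j ∉ bad := fun j hj => by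
    rw [hAk] at hj
    exact (Finset.mem_sdiff.1 hj).2
  have hkV : k ∈ V := Finset.mem_filter.2 ⟨Finset.mem_range.2 hkv.lt, hkv⟩
  have hs : ψ (mv (fun q => 2 * q + 1) (pat (A k) (leftPt N k) (nestPt N k))) = true := by
    by_contra hc
    exact hnb _ (hpick k hkv) (Finset.mem_union_left _ (Finset.mem_union_left _
      (Finset.mem_image_of_mem _ (Finset.mem_filter.2 ⟨hkV, hc⟩))))
  have ht : ψ (mv (fun q => 2 * q + 1) (pat (A k) (leftPt N k) (crossPt N k))) = false := by
    by_contra hc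
    exact hnb _ (hpick k hkv) (Finset.mem_union_left _ (Finset.mem_union_right _
      (Finset.mem_image_of_mem _ (Finset.mem_filter.2 ⟨hkV, hc⟩))))
  have hpath := path_const hψ (A k) hkv.sub k hkv.lt (fun p hp hpA hfl =>
    hnb _ hpA (Finset.mem_union_right _ (Finset.mem_image_of_mem (fun p => p / (4 * N))
      (Finset.mem_filter.2 ⟨Finset.mem_range.2 hp, hfl⟩)))) _ (crossPt N k)
    (fun j _ => ⟨by simp only [nestPt, crossPt]; omega, le_rfl⟩) rfl
  rw [hs, ht] at hpath
  exact absurd hpath (by simp)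

/-- a VC class which cannot be disambiguated: there is a partial concept
class `H ⊆ {0,1,⋆}^ℕ` with `VC(H) = 1` and `TD(H) ≤ 2` such that every total concept class
disambiguating `H` has infinite VC dimension (hence infinite Littlestone dimension). -/
theorem exists_vc_one_class_with_no_finite_vc_disambiguation :
    ∃ H : Set (ℕ → Option Bool),
      VCDimEq H 1 ∧ ¬ ThresholdGe H 3 ∧
      ∀ Hbar : Set (ℕ → Bool),
        (∀ S : List (ℕ × Bool), RealizableSeq H S → RealizableSeq (asPartial Hbar) S) →
        ∀ d : ℕ, ∃ U : Finset ℕ, Shatters (asPartial Hbar) U ∧ U.card = d :=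
  ⟨csClass, vc_csClass, td_csClass, fun _ hH d => csClass_forces_shattering hH d⟩
end

section
/- Let X be a finite set with |X| = n ≥ 2 and let H be a partial concept class on X with VC(H) = d ≥ 1. Then there exists a total concept class H̄ ⊆ {0,1}^X that strongly disambiguates H (every h ∈ H has an extension in H̄) with |H̄| ≤ Σ_{i=0}^{k} C(n,i), where k = ⌊1 + d · log₂(n)⌋. In particular, H has a disambiguation of size n^{O(d · log n)}. -/
open Classical in
/-- The number of sets shattered by a partial concept class, the empty set included. -/
noncomputable def shatterCount {X : Type*} [Fintype X] (H : Set (X → Option Bool)) : ℕ :=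
  (Finset.univ.filter (fun U : Finset X => Shatters H U)).card

/-- The concepts of `H` that take the value `b` at `x` (in particular, are defined there). -/
def restrictAt {X : Type*} (H : Set (X → Option Bool)) (x : X) (b : Bool) :
    Set (X → Option Bool) :=
  {h | h ∈ H ∧ h x = some b}

theorem Shatters.of_restrictAt {X : Type*} {H : Set (X → Option Bool)} {x : X} {b : Bool}
    {U : Finset X} (hU : Shatters (restrictAt H x b) U) : Shatters H U := fun f => by
  obtain ⟨h, hh, hf⟩ := hU f
  exact ⟨h, hh.1, hf⟩

theorem Shatters.notMem_of_restrictAt {X : Type*} {H : Set (X → Option Bool)} {x : X} {b : Bool}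
    {U : Finset X} (hU : Shatters (restrictAt H x b) U) : x ∉ U := fun hx => by
  obtain ⟨h, hh, hf⟩ := hU fun _ => !b
  have h1 := hf x hx
  rw [hh.2] at h1
  cases b <;> simp at h1

theorem Shatters.insert_of_restrictAt {X : Type*} [DecidableEq X] {H : Set (X → Option Bool)}
    {x : X} {U : Finset X} (hU : ∀ b, Shatters (restrictAt H x b) U) :
    Shatters H (insert x U) := fun f => by
  obtain ⟨h, hh, hf⟩ := hU (f x) f
  refine ⟨h, hh.1, fun y hy => ?_⟩
  rcases Finset.mem_insert.1 hy with rfl | hy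
  · exact hh.2
  · exact hf y hy

/-- A set shattered by exactly one half is shattered by `H` and avoids `x`; a set `U` shattered by
both halves accounts for the two sets `U` and `insert x U`. -/
theorem shatterCount_restrict_add_le {X : Type*} [Fintype X] (H : Set (X → Option Bool)) (x : X)
    (b : Bool) :
    shatterCount (restrictAt H x b) + shatterCount (restrictAt H x (!b)) ≤ shatterCount H := by
  classical
  unfold shatterCount
  set S := Finset.univ.filter (fun U : Finset X => Shatters (restrictAt H x b) U) with hS
  set T := Finset.univ.filter (fun U : Finset X => Shatters (restrictAt H x (!b)) U) with hT
  have hnot : ∀ U ∈ S ∪ T, x ∉ U := by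
    intro U hU
    simp only [hS, hT, Finset.mem_union, Finset.mem_filter, Finset.mem_univ, true_and] at hU
    exact hU.elim Shatters.notMem_of_restrictAt Shatters.notMem_of_restrictAt
  have hinj : ((S ∩ T).image (insert x)).card = (S ∩ T).card := by
    refine Finset.card_image_of_injOn fun U hU V hV hUV => ?_
    have hxU := hnot U (Finset.mem_union_left _ (Finset.mem_inter.1 hU).1)
    have hxV := hnot V (Finset.mem_union_left _ (Finset.mem_inter.1 hV).1)
    rw [← Finset.erase_insert hxU, ← Finset.erase_insert hxV]
    exact congrArg (fun W => Finset.erase W x) hUV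
  have hdisj : Disjoint (S ∪ T) ((S ∩ T).image (insert x)) := by
    rw [Finset.disjoint_left]
    intro U hU hU'
    obtain ⟨V, -, rfl⟩ := Finset.mem_image.1 hU'
    exact hnot _ hU (Finset.mem_insert_self x V)
  rw [← Finset.card_union_add_card_inter, ← hinj, ← Finset.card_union_of_disjoint hdisj]
  refine Finset.card_le_card fun U hU => ?_
  simp only [Finset.mem_filter, Finset.mem_univ, true_and]
  rcases Finset.mem_union.1 hU with hU | hU
  · simp only [hS, hT, Finset.mem_union, Finset.mem_filter, Finset.mem_univ, true_and] at hU
    exact hU.elim Shatters.of_restrictAt Shatters.of_restrictAt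
  · obtain ⟨V, hV, rfl⟩ := Finset.mem_image.1 hU
    simp only [hS, hT, Finset.mem_inter, Finset.mem_filter, Finset.mem_univ, true_and] at hV
    refine Shatters.insert_of_restrictAt fun c => ?_
    by_cases hc : c = b
    · exact hc ▸ hV.1
    · rw [Bool.eq_not.2 hc]
      exact hV.2

theorem one_le_shatterCount {X : Type*} [Fintype X] {H : Set (X → Option Bool)}
    {h : X → Option Bool} (hh : h ∈ H) : 1 ≤ shatterCount H := by
  classical
  exact Finset.card_pos.2 ⟨∅, Finset.mem_filter.2 ⟨Finset.mem_univ _, fun _ => ⟨h, hh, by simp⟩⟩⟩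

/-- Some label is the majority: its complementary half has at most half of the potential. -/
theorem exists_majority {X : Type*} [Fintype X] (H : Set (X → Option Bool)) (x : X) :
    ∃ b : Bool, 2 * shatterCount (restrictAt H x (!b)) ≤ shatterCount H := by
  have h := shatterCount_restrict_add_le H x true
  rw [Bool.not_true] at h
  rcases le_total (shatterCount (restrictAt H x true)) (shatterCount (restrictAt H x false))
    with h' | h'
  · exact ⟨false, by rw [Bool.not_false]; lia⟩
  · exact ⟨true, by rw [Bool.not_true]; lia⟩

/-- Compression along the list `l` of points: `G` reconstructs, from the set `A` of points where
the majority prediction fails on `h`, a total concept extending `h` on `l`. -/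
theorem exists_decoder {X : Type*} [Fintype X] (l : List X) (hl : l.Nodup) :
    ∀ H : Set (X → Option Bool), ∃ G : Finset X → X → Bool, ∀ h ∈ H, ∃ A : Finset X,
      (∀ x ∈ A, x ∈ l) ∧ 2 ^ A.card ≤ shatterCount H ∧
        ∀ x ∈ l, ∀ b, h x = some b → G A x = b := by
  classical
  induction l with
  | nil =>
    exact fun H => ⟨fun _ _ => false, fun h hh => ⟨∅, by simp, by
      simpa using one_le_shatterCount hh, by simp⟩⟩
  | cons x l ih =>
    intro H
    obtain ⟨hx, hl⟩ := List.nodup_cons.1 hl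
    obtain ⟨b, hb⟩ := exists_majority H x
    obtain ⟨G₀, h₀⟩ := ih hl H
    obtain ⟨G₁, h₁⟩ := ih hl (restrictAt H x (!b))
    refine ⟨fun A => if x ∈ A then Function.update (G₁ (A.erase x)) x (!b)
      else Function.update (G₀ A) x b, fun h hh => ?_⟩
    by_cases hhx : h x = some (!b)
    · obtain ⟨A, hA, hcard, hG⟩ := h₁ h ⟨hh, hhx⟩
      have hxA : x ∉ A := fun h' => hx (hA x h')
      refine ⟨insert x A, ?_, ?_, ?_⟩
      · intro y hy
        rcases Finset.mem_insert.1 hy with rfl | hy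
        · exact List.mem_cons_self
        · exact List.mem_cons_of_mem _ (hA y hy)
      · rw [Finset.card_insert_of_notMem hxA, pow_succ]
        lia
      · intro y hy c hc
        simp only [Finset.mem_insert_self, if_true, Finset.erase_insert hxA]
        by_cases hyx : y = x
        · subst hyx
          rw [hhx] at hc
          simpa using hc
        · rw [Function.update_of_ne hyx]
          exact hG y ((List.mem_cons.1 hy).resolve_left hyx) c hc
    · obtain ⟨A, hA, hcard, hG⟩ := h₀ h hh
      have hxA : x ∉ A := fun h' => hx (hA x h')
      refine ⟨A, fun y hy => List.mem_cons_of_mem _ (hA y hy), hcard, ?_⟩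
      intro y hy c hc
      simp only [hxA, if_false]
      by_cases hyx : y = x
      · subst hyx
        rw [Function.update_self]
        by_contra hbc
        exact hhx (by rw [hc, Bool.eq_not.2 (Ne.symm hbc)])
      · rw [Function.update_of_ne hyx]
        exact hG y ((List.mem_cons.1 hy).resolve_left hyx) c hc

theorem card_filter_card_le {X : Type*} [Fintype X] (k : ℕ) :
    (Finset.univ.filter (fun A : Finset X => A.card ≤ k)).card
      = ∑ i ∈ Finset.range (k + 1), (Fintype.card X).choose i := by
  classical
  rw [Finset.card_eq_sum_card_fiberwise (f := Finset.card) (t := Finset.range (k + 1))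
    (by intro A hA; simpa [Nat.lt_succ_iff] using hA)]
  refine Finset.sum_congr rfl fun i hi => ?_
  rw [← Finset.card_univ, ← Finset.card_powersetCard]
  congr 1
  ext A
  have := Finset.mem_range.1 hi
  simp only [Finset.mem_filter, Finset.mem_univ, true_and, Finset.mem_powersetCard,
    Finset.subset_univ]
  lia

theorem sum_choose_le_two_mul_pow {n : ℕ} (hn : 2 ≤ n) (d : ℕ) :
    ∑ i ∈ Finset.range (d + 1), n.choose i ≤ 2 * n ^ d := by
  induction d with
  | zero => simp
  | succ d ih =>
    rw [Finset.sum_range_succ]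
    have h1 := Nat.choose_le_pow n (d + 1)
    have h2 : 2 * n ^ d ≤ n ^ (d + 1) := by
      rw [pow_succ, mul_comm]
      gcongr
    lia

/-- quasipolynomial Sauer–Shelah–Perles lemma: a partial concept class on a
finite domain of size `n ≥ 2` with `VC(H) = d ≥ 1` has a strong disambiguation of size at
most `Σ_{i ≤ k} C(n,i)` with `k = ⌊1 + d·log₂ n⌋`, i.e. of size `n^{O(d log n)}`. -/
theorem quasipolynomial_disambiguation {X : Type*} [Fintype X]
    (H : Set (X → Option Bool)) (n d : ℕ)
    (hn : Fintype.card X = n) (hn2 : 2 ≤ n) (hd : 1 ≤ d) (hVC : VCDimEq H d) :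
    ∃ Hbar : Set (X → Bool),
      (∀ h ∈ H, ∃ g ∈ Hbar, ∀ (x : X) (b : Bool), h x = some b → g x = b) ∧
      Hbar.encard ≤
        ((∑ i ∈ Finset.range (⌊1 + (d : ℝ) * Real.logb 2 n⌋₊ + 1), n.choose i : ℕ) : ℕ∞) := by
  classical
  subst hn
  obtain ⟨G, hG⟩ := exists_decoder (Finset.univ : Finset X).toList (Finset.nodup_toList _) H
  set k := ⌊1 + (d : ℝ) * Real.logb 2 (Fintype.card X)⌋₊ with hk
  refine ⟨↑((Finset.univ.filter (fun A : Finset X => A.card ≤ k)).image G), ?_, ?_⟩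
  · intro h hh
    obtain ⟨A, -, hcard, hA⟩ := hG h hh
    refine ⟨G A, ?_, fun x b => hA x (by simp) b⟩
    have hbound : 2 ^ A.card ≤ 2 * Fintype.card X ^ d := by
      refine hcard.trans (le_trans ?_ (sum_choose_le_two_mul_pow hn2 d))
      rw [← card_filter_card_le]
      exact Finset.card_le_card
        (Finset.monotone_filter_right _ fun U _ hU => hVC.2 U hU)
    have hAk : A.card ≤ k := by
      have hpos : (0 : ℝ) < Fintype.card X := by
        exact_mod_cast (by lia : 0 < Fintype.card X)
      apply Nat.le_floor
      have hreal : (2 : ℝ) ^ A.card ≤ 2 * (Fintype.card X : ℝ) ^ d := by exact_mod_cast hbound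
      have hlog := Real.logb_le_logb_of_le (b := 2) (by norm_num) (by positivity) hreal
      rw [Real.logb_mul (by norm_num) (by positivity), Real.logb_pow, Real.logb_pow,
        Real.logb_self_eq_one (by norm_num), mul_one] at hlog
      exact hlog
    simp only [Finset.coe_image, Set.mem_image, Finset.mem_coe, Finset.mem_filter,
      Finset.mem_univ, true_and]
    exact ⟨A, hAk, rfl⟩
  · rw [Set.encard_coe_eq_coe_finsetCard, ← card_filter_card_le]
    exact_mod_cast Finset.card_image_le
end

section
/- Let d ∈ ℕ, let X = {x ∈ ℝ^d : ‖x‖ ≤ 1} be the closed Euclidean unit ball, and let γ > 0. Let G_{d,γ} be the class of all partial concepts h : X → {0,1,⋆} such that ‖x₀ − x₁‖ ≥ γ for all x₀ ∈ h⁻¹(0) and x₁ ∈ h⁻¹(1), and let M_d(γ) be the γ-packing number of X, i.e. the largest m for which there exist x₁,…,x_m ∈ X with ‖xᵢ − xⱼ‖ ≥ γ for all i ≠ j. Then VC(G_{d,γ}) = M_d(γ). -/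
/-- The closed unit ball of `ℝ^d`. -/
def UnitBall (d : ℕ) : Type := {x : EuclideanSpace ℝ (Fin d) // ‖x‖ ≤ 1}

/-- There exist `m` points of the unit ball with pairwise distances at least `γ`. -/
def HasPacking (d : ℕ) (γ : ℝ) (m : ℕ) : Prop :=
  ∃ x : Fin m → UnitBall d, ∀ i j, i ≠ j → γ ≤ ‖(x i).1 - (x j).1‖

/-- The class `G_{d,γ}` of all partial concepts on the unit ball with a `γ`-margin
separation between the `0`-labeled and `1`-labeled points. -/
def GammaMarginClass (d : ℕ) (γ : ℝ) : Set (UnitBall d → Option Bool) :=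
  {h | ∀ x₀ x₁ : UnitBall d, h x₀ = some false → h x₁ = some true → γ ≤ ‖x₀.1 - x₁.1‖}

/-! A finite subset of the ball is shattered by the `γ`-margin class exactly when its points are
pairwise at distance at least `γ`: two distinct shattered points can be given opposite labels, so
the margin condition separates them, and conversely any labelling of a `γ`-separated set, extended
by `⋆`, satisfies the margin condition. Hence the shattered sets are the ranges of packings (which
are injective because `γ > 0`), and both maxima agree. -/

theorem shatters_gammaMarginClass_iff {d : ℕ} {γ : ℝ} (U : Finset (UnitBall d)) :
    Shatters (GammaMarginClass d γ) U ↔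
      ∀ x ∈ U, ∀ y ∈ U, x ≠ y → γ ≤ ‖x.1 - y.1‖ := by
  classical
  constructor
  · intro hU x hx y hy hxy
    obtain ⟨h, hh, hf⟩ := hU (fun z => decide (z = y))
    exact hh x y (by simp [hf x hx, hxy]) (by simp [hf y hy])
  · intro hU f
    refine ⟨fun x => if x ∈ U then some (f x) else none, ?_, fun x hx => by simp [hx]⟩
    intro x y hx hy
    by_cases hxU : x ∈ U <;> by_cases hyU : y ∈ U <;> simp [hxU, hyU] at hx hy
    refine hU x hxU y hyU ?_
    rintro rfl
    simp [hx] at hy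

theorem injective_of_packing {d m : ℕ} {γ : ℝ} (hγ : 0 < γ) {x : Fin m → UnitBall d}
    (hx : ∀ i j, i ≠ j → γ ≤ ‖(x i).1 - (x j).1‖) : Function.Injective x := by
  intro i j hij
  by_contra hne
  have h := hx i j hne
  rw [hij, sub_self, norm_zero] at h
  exact absurd h (not_le.mpr hγ)

/-- `VC(G_{d,γ}) = M_d(γ)`, the `γ`-packing number of the unit ball. -/
theorem vc_of_gamma_margin_class_eq_packing (d : ℕ) (γ : ℝ) (hγ : 0 < γ) (M : ℕ)
    (hpack : HasPacking d γ M) (hmax : ¬ HasPacking d γ (M + 1)) :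
    VCDimEq (GammaMarginClass d γ) M := by
  classical
  constructor
  · obtain ⟨x, hx⟩ := hpack
    refine ⟨Finset.univ.image x, ?_, ?_⟩
    · rw [shatters_gammaMarginClass_iff]
      intro a ha b hb hab
      obtain ⟨i, -, rfl⟩ := Finset.mem_image.mp ha
      obtain ⟨j, -, rfl⟩ := Finset.mem_image.mp hb
      exact hx i j (fun h => hab (congrArg x h))
    · rw [Finset.card_image_of_injective _ (injective_of_packing hγ hx), Finset.card_univ,
        Fintype.card_fin]
  · intro U hU
    rw [shatters_gammaMarginClass_iff] at hU
    by_contra hcard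
    obtain ⟨V, hVU, hV⟩ := Finset.exists_subset_card_eq (show M + 1 ≤ U.card by omega)
    let e := (V.equivFinOfCardEq hV).symm
    refine hmax ⟨fun i => (e i).1, fun i j hij => hU _ (hVU (e i).2) _ (hVU (e j).2) ?_⟩
    exact fun h => hij (e.injective (Subtype.ext h))
end

section
/- Let d ∈ ℕ, let X = {x ∈ ℝ^d : ‖x‖ ≤ 1} be the closed Euclidean unit ball, let γ > 0, and let G_{d,γ} be the class of all partial concepts h : X → {0,1,⋆} such that ‖x₀ − x₁‖ ≥ γ for all x₀ ∈ h⁻¹(0) and x₁ ∈ h⁻¹(1). Then there exists a total concept class Ḡ ⊆ {0,1}^X that strongly disambiguates G_{d,γ} (every h ∈ G_{d,γ} has an extension ḡ ∈ Ḡ with ḡ(x) = h(x) for all x ∈ supp(h)) and satisfies VC(Ḡ) = M_d(γ/2), where M_d(γ/2) is the (γ/2)-packing number of X (the largest m for which there exist x₁,…,x_m ∈ X with pairwise distances at least γ/2). -/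
/-- A packing that admits no packing with one more point is a net at the same scale. -/
lemma exists_near_of_maximal_packing {d M : ℕ} {r : ℝ} (x : Fin M → UnitBall d)
    (hx : ∀ i j, i ≠ j → r ≤ ‖(x i).1 - (x j).1‖) (hmax : ¬ HasPacking d r (M + 1))
    (y : UnitBall d) : ∃ i, ‖y.1 - (x i).1‖ < r := by
  by_contra! hfar
  refine hmax ⟨Fin.cons y x, fun i j hij => ?_⟩
  induction i using Fin.cases with
  | zero =>
    induction j using Fin.cases with
    | zero => exact absurd rfl hij
    | succ j => simpa using hfar j
  | succ i =>
    induction j using Fin.cases with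
    | zero => simpa [norm_sub_rev] using hfar i
    | succ j => simpa using hx i j (fun h => hij (by rw [h]))

/-- If `c` has a section on a finite index type, the class of all functions factoring through `c`
has VC dimension equal to the number of indices. -/
lemma vcDimEq_factor {X : Type*} {M : ℕ} (c : X → Fin M) (x : Fin M → X)
    (hcx : ∀ i, c (x i) = i) :
    VCDimEq (asPartial (Set.range fun (f : Fin M → Bool) => f ∘ c)) M := by
  classical
  refine ⟨⟨Finset.univ.image x, fun f => ?_, ?_⟩, fun U hU => ?_⟩
  · refine ⟨_, ⟨_, ⟨f ∘ x, rfl⟩, rfl⟩, fun y hy => ?_⟩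
    obtain ⟨i, -, rfl⟩ := Finset.mem_image.1 hy
    simp [hcx]
  · rw [Finset.card_image_of_injective _ (Function.LeftInverse.injective hcx)]
    simp
  · have hinj : Set.InjOn c U := by
      intro u hu v hv huv
      by_contra hne
      -- No function of `c` separates `u` from `v`, but shattering realizes the indicator of `u`.
      obtain ⟨_, ⟨_, ⟨f, rfl⟩, rfl⟩, hf⟩ := hU fun y => decide (y = u)
      have h1 := hf u hu
      have h2 := hf v hv
      simp only [Function.comp_apply, Option.some.injEq] at h1 h2
      rw [huv, h2] at h1
      simp [Ne.symm hne] at h1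
    simpa using Finset.card_le_card_of_injOn c (t := Finset.univ) (by simp) hinj

/-- `G_{d,γ}` has a strong disambiguation `Ḡ` with
`VC(Ḡ) = M_d(γ/2)`, the `(γ/2)`-packing number of the unit ball. -/
theorem gamma_margin_class_strong_disambiguation (d : ℕ) (γ : ℝ) (hγ : 0 < γ) (M : ℕ)
    (hpack : HasPacking d (γ / 2) M) (hmax : ¬ HasPacking d (γ / 2) (M + 1)) :
    ∃ Gbar : Set (UnitBall d → Bool),
      (∀ h ∈ GammaMarginClass d γ, ∃ g ∈ Gbar,
        ∀ (x : UnitBall d) (b : Bool), h x = some b → g x = b) ∧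
      VCDimEq (asPartial Gbar) M := by
  classical
  obtain ⟨x, hx⟩ := hpack
  choose c hc using exists_near_of_maximal_packing x hx hmax
  have hcx : ∀ i, c (x i) = i := by
    intro i
    by_contra hne
    exact absurd (hc (x i)) (not_lt.2 (hx i _ (Ne.symm hne)))
  refine ⟨_, fun h hh => ?_, vcDimEq_factor c x hcx⟩
  -- A cell gets the label `true` exactly when `h` takes the value `1` somewhere in it.
  refine ⟨_, ⟨fun i => decide (∃ z, c z = i ∧ h z = some true), rfl⟩, fun y b hy => ?_⟩
  cases b with
  | true => exact decide_eq_true ⟨y, rfl, hy⟩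
  | false =>
    refine decide_eq_false ?_
    rintro ⟨z, hz, hzt⟩
    have hmargin := hh y z hy hzt
    have htri := norm_sub_le_norm_sub_add_norm_sub y.1 (x (c y)).1 z.1
    have hy' := hc y
    have hz' := hc z
    rw [hz, norm_sub_rev] at hz'
    linarith
end

section
/- Let X be an infinite set and define the two-argument majority function U : {0,1,⋆}² → {0,1,⋆} by: U(y,y') = 1 if 1 ∈ {y,y'} ⊆ {1,⋆}; U(y,y') = 0 if 0 ∈ {y,y'} ⊆ {0,⋆}; and U(y,y') = ⋆ otherwise. Then there exist partial concept classes H₁, H₂ on X with VC(H₁) = VC(H₂) = 0 such that the composed class { x ↦ U(h₁(x), h₂(x)) : h₁ ∈ H₁, h₂ ∈ H₂ } has infinite VC dimension. (Concretely, one may take H₁ to be all functions X → {0,⋆} and H₂ to be all functions X → {1,⋆}.) -/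
/-- The two-argument majority function `U` on `{0,1,⋆}`:
`U(y,y') = 1` if `1 ∈ {y,y'} ⊆ {1,⋆}`, `U(y,y') = 0` if `0 ∈ {y,y'} ⊆ {0,⋆}`,
and `U(y,y') = ⋆` otherwise. -/
def majU : Option Bool → Option Bool → Option Bool
  | some true, some true => some true
  | some true, none => some true
  | none, some true => some true
  | some false, some false => some false
  | some false, none => some false
  | none, some false => some false
  | _, _ => none

/-- The class of all partial concepts that never take the value `b` has VC dimension `0`: the
constant pattern `b` is not realized on any nonempty set. -/
theorem vcDimEq_zero_of_avoids {X : Type*} (b : Bool) :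
    VCDimEq {h : X → Option Bool | ∀ x, h x ≠ some b} 0 := by
  refine ⟨⟨∅, fun _ => ⟨fun _ => none, by simp, by simp⟩, rfl⟩, fun U hU => ?_⟩
  obtain ⟨h, hh, hb⟩ := hU fun _ => b
  have hempty : U = ∅ := Finset.eq_empty_of_forall_notMem fun x hx => hh x (hb x hx)
  simp [hempty]

/-- failure of closure properties for partial concept classes: on any
infinite set `X`, there are partial concept classes `H₁, H₂` of VC dimension `0` whose
`majU`-composition has infinite VC dimension. -/
theorem closure_failure_for_majority {X : Type*} [Infinite X] :
    ∃ H₁ H₂ : Set (X → Option Bool),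
      VCDimEq H₁ 0 ∧ VCDimEq H₂ 0 ∧
      ∀ d : ℕ, ∃ U : Finset X,
        Shatters {f : X → Option Bool |
          ∃ h₁ ∈ H₁, ∃ h₂ ∈ H₂, f = fun x => majU (h₁ x) (h₂ x)} U ∧ d ≤ U.card := by
  refine ⟨{h | ∀ x, h x ≠ some true}, {h | ∀ x, h x ≠ some false},
    vcDimEq_zero_of_avoids true, vcDimEq_zero_of_avoids false, fun d => ?_⟩
  obtain ⟨U, hU⟩ := Infinite.exists_subset_card_eq X d
  refine ⟨U, fun f => ?_, hU.ge⟩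
  refine ⟨_, ⟨fun x => if f x then none else some false, ?_,
    fun x => if f x then some true else none, ?_, rfl⟩, fun x _ => ?_⟩
  · intro x
    cases f x <;> simp
  · intro x
    cases f x <;> simp
  · cases hf : f x <;> simp [hf, majU]
end

section
/- For any set X and any class H of functions X → {0,1,⋆}, the Natarajan dimension of H (viewing {0,1,⋆} as three labels) satisfies d_N(H) ≤ VC(H) + VC({supp(h) : h ∈ H}), where d_N(H) is the largest d for which there exist points x₁,…,x_d ∈ X and label pairs (y₁⁰,y₁¹),…,(y_d⁰,y_d¹) ∈ {0,1,⋆}² with yᵢ⁰ ≠ yᵢ¹ for all i, such that for every b ∈ {0,1}^d there exists h ∈ H with h(xᵢ) = yᵢ^{bᵢ} for all i ≤ d. -/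
/-- A finite set `U` is shattered by a family of sets `F`
(every subset of `U` is cut out by some member of `F`). -/
def ShattersFam {X : Type*} (F : Set (Set X)) (U : Finset X) : Prop :=
  ∀ V ⊆ U, ∃ s ∈ F, ∀ x ∈ U, x ∈ s ↔ x ∈ V

/-- the Natarajan dimension of a partial concept class (viewing
`{0,1,⋆}` as three labels) is at most `VC(H) + VC({supp(h) : h ∈ H})`.  Formally: any
Natarajan-shattered configuration of size `d` forces `d ≤ a + b` whenever `a` bounds the
size of every `H`-shattered set and `b` bounds the size of every set shattered by the
family of supports. -/
theorem natarajan_le_vc_add_support_vc {X : Type*} (H : Set (X → Option Bool))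
    (d a b : ℕ) (x : Fin d → X) (y0 y1 : Fin d → Option Bool)
    (hy : ∀ i, y0 i ≠ y1 i)
    (hshat : ∀ bv : Fin d → Bool, ∃ h ∈ H,
      ∀ i : Fin d, h (x i) = (if bv i then y1 i else y0 i))
    (hVC : ∀ U : Finset X, Shatters H U → U.card ≤ a)
    (hVCsupp : ∀ U : Finset X,
      ShattersFam ((fun h : X → Option Bool => {z : X | h z ≠ none}) '' H) U → U.card ≤ b) :
    d ≤ a + b := by
  classical
  have hinj : Function.Injective x := by
    intro i j hij
    by_contra hne
    -- Fix the label at `i` and vary the label at `j`: both labels of `j` would equal `y0 i`.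
    obtain ⟨h, -, hh⟩ := hshat (fun _ => false)
    obtain ⟨g, -, hg⟩ := hshat (fun k => decide (k = j))
    have e1 := hh i
    have e2 := hh j
    have e3 := hg i
    have e4 := hg j
    simp only [hij, hne, decide_false, decide_true, Bool.false_eq_true, if_true, if_false]
      at e1 e2 e3 e4
    exact hy j (by rw [← e2, e1, ← e3, e4])
  let P : Fin d → Prop := fun i => y0 i ≠ none ∧ y1 i ≠ none
  have hA : ((Finset.univ.filter P).image x).card ≤ a := by
    apply hVC
    intro f
    obtain ⟨h, hH, hh⟩ := hshat (fun i => decide (y1 i = some (f (x i))))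
    refine ⟨h, hH, fun z hz => ?_⟩
    obtain ⟨i, hi, rfl⟩ := Finset.mem_image.mp hz
    have hP : P i := (Finset.mem_filter.mp hi).2
    have hyi := hy i
    rw [hh i]
    obtain ⟨h0, h1⟩ := hP
    generalize f (x i) = c
    revert hyi h0 h1
    generalize y0 i = u
    generalize y1 i = v
    revert u v c
    decide
  have hB : ((Finset.univ.filter (fun i => ¬ P i)).image x).card ≤ b := by
    apply hVCsupp
    intro V _
    -- Pick the non-`⋆` label exactly at the points of `V`.
    obtain ⟨h, hH, hh⟩ := hshat (fun i => decide (y1 i ≠ none ↔ x i ∈ V))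
    refine ⟨_, ⟨h, hH, rfl⟩, fun z hz => ?_⟩
    obtain ⟨i, hi, rfl⟩ := Finset.mem_image.mp hz
    have hP : ¬ P i := (Finset.mem_filter.mp hi).2
    have hyi := hy i
    simp only [P] at hP
    simp only [Set.mem_ofPred_eq, hh i, decide_eq_true_eq]
    by_cases hV : x i ∈ V <;> by_cases h1 : y1 i = none <;> by_cases h0 : y0 i = none <;>
      simp_all
  rw [Finset.card_image_of_injective _ hinj] at hA hB
  have hcard := Finset.card_filter_add_card_filter_not (s := Finset.univ) P
  rw [Finset.card_univ, Fintype.card_fin] at hcard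
  omega
end
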